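/- Let $\alpha = \sqrt[5]{2}$ (the real fifth root of $2$) and $K = \mathbb{Q}(\alpha)$. The only solutions of the equation $\alpha^4 X^4 + \alpha^3 X^3 + \alpha^2 X^2 + \alpha X + 1 = (\alpha - 1) Y^2$ with $X \in \mathbb{Q}$ and $Y \in K$ are $(X, Y) = \bigl(1, \pm(\alpha^4+\alpha^3+\alpha^2+\alpha+1)\bigr)$ and $(X, Y) = \bigl(-\tfrac{1}{3}, \pm\tfrac{3\alpha^4+5\alpha^3-\alpha^2+3\alpha+5}{9}\bigr)$. -/

import Mathlib

open NumberField

/-- `a` is an integral fifth root of two whose powers form a rational basis of `K`. -/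
structure IsFifthRootBasis {K : Type*} [Field K] [NumberField K] (a : 𝓞 K)
    (b : Module.Basis (Fin 5) ℚ K) : Prop where
  pow_five : a ^ 5 = 2
  basis_eq : ∀ i, b i = (a : K) ^ (i : ℕ)

namespace IsFifthRootBasis

variable {K : Type*} [Field K] [NumberField K] {a : 𝓞 K} {b : Module.Basis (Fin 5) ℚ K}

theorem coe_pow_five (h : IsFifthRootBasis a b) : (a : K) ^ 5 = 2 := by
  have := congrArg (algebraMap (𝓞 K) K) h.pow_five
  rwa [map_pow, map_ofNat] at this

theorem finrank_eq (_h : IsFifthRootBasis a b) : Module.finrank ℚ K = 5 := by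
  simpa using Module.finrank_eq_card_basis b

theorem leftMulMatrix_eq (h : IsFifthRootBasis a b) (c₀ c₁ c₂ c₃ c₄ : ℚ) :
    Algebra.leftMulMatrix b (algebraMap ℚ K c₀ + algebraMap ℚ K c₁ * a + algebraMap ℚ K c₂ * a ^ 2
      + algebraMap ℚ K c₃ * a ^ 3 + algebraMap ℚ K c₄ * a ^ 4) =
      !![c₀, 2 * c₄, 2 * c₃, 2 * c₂, 2 * c₁; c₁, c₀, 2 * c₄, 2 * c₃, 2 * c₂;
        c₂, c₁, c₀, 2 * c₄, 2 * c₃; c₃, c₂, c₁, c₀, 2 * c₄; c₄, c₃, c₂, c₁, c₀] := by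
  have ha := h.coe_pow_five
  ext i j
  rw [Algebra.leftMulMatrix_eq_repr_mul]
  have key : (algebraMap ℚ K c₀ + algebraMap ℚ K c₁ * a + algebraMap ℚ K c₂ * a ^ 2
      + algebraMap ℚ K c₃ * a ^ 3 + algebraMap ℚ K c₄ * a ^ 4) * b j =
      ∑ k, (!![c₀, 2 * c₄, 2 * c₃, 2 * c₂, 2 * c₁; c₁, c₀, 2 * c₄, 2 * c₃, 2 * c₂;
        c₂, c₁, c₀, 2 * c₄, 2 * c₃; c₃, c₂, c₁, c₀, 2 * c₄; c₄, c₃, c₂, c₁, c₀] :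
          Matrix (Fin 5) (Fin 5) ℚ) k j • b k := by
    have h6 : (a : K) ^ 6 = 2 * a := by linear_combination (a : K) * ha
    have h7 : (a : K) ^ 7 = 2 * a ^ 2 := by linear_combination (a : K) ^ 2 * ha
    have h8 : (a : K) ^ 8 = 2 * a ^ 3 := by linear_combination (a : K) ^ 3 * ha
    fin_cases j <;> simp [Fin.sum_univ_five, h.basis_eq, Algebra.smul_def] <;> ring_nf <;>
      simp only [ha, h6, h7, h8] <;> ring
  rw [key, Module.Basis.repr_sum_self]

theorem norm_eq (h : IsFifthRootBasis a b) (c₀ c₁ c₂ c₃ c₄ : ℤ) :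
    Algebra.norm ℤ (c₀ + c₁ * a + c₂ * a ^ 2 + c₃ * a ^ 3 + c₄ * a ^ 4) =
      Matrix.det !![c₀, 2 * c₄, 2 * c₃, 2 * c₂, 2 * c₁; c₁, c₀, 2 * c₄, 2 * c₃, 2 * c₂;
        c₂, c₁, c₀, 2 * c₄, 2 * c₃; c₃, c₂, c₁, c₀, 2 * c₄; c₄, c₃, c₂, c₁, c₀] := by
  have key := h.leftMulMatrix_eq c₀ c₁ c₂ c₃ c₄
  apply Int.cast_injective (α := ℚ)
  rw [Algebra.coe_norm_int, Int.cast_det]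
  have : ((c₀ + c₁ * a + c₂ * a ^ 2 + c₃ * a ^ 3 + c₄ * a ^ 4 : 𝓞 K) : K) =
      algebraMap ℚ K c₀ + algebraMap ℚ K c₁ * a + algebraMap ℚ K c₂ * a ^ 2
      + algebraMap ℚ K c₃ * a ^ 3 + algebraMap ℚ K c₄ * a ^ 4 := by simp
  rw [this, Algebra.norm_eq_matrix_det b, key]
  congr 1
  ext i j
  fin_cases i <;> fin_cases j <;> simp

theorem trace_eq (h : IsFifthRootBasis a b) (c₀ c₁ c₂ c₃ c₄ : ℤ) :
    Algebra.trace ℤ (𝓞 K) (c₀ + c₁ * a + c₂ * a ^ 2 + c₃ * a ^ 3 + c₄ * a ^ 4) = 5 * c₀ := by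
  have key := h.leftMulMatrix_eq c₀ c₁ c₂ c₃ c₄
  apply Int.cast_injective (α := ℚ)
  rw [Algebra.coe_trace_int]
  have : ((c₀ + c₁ * a + c₂ * a ^ 2 + c₃ * a ^ 3 + c₄ * a ^ 4 : 𝓞 K) : K) =
      algebraMap ℚ K c₀ + algebraMap ℚ K c₁ * a + algebraMap ℚ K c₂ * a ^ 2
      + algebraMap ℚ K c₃ * a ^ 3 + algebraMap ℚ K c₄ * a ^ 4 := by simp
  rw [this, Algebra.trace_eq_matrix_trace b, key]
  simp [Matrix.trace, Fin.sum_univ_five]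
  ring

theorem discr_pow (h : IsFifthRootBasis a b) :
    Algebra.discr ℤ (fun i : Fin 5 => a ^ (i : ℕ)) = 50000 := by
  have ha := h.pow_five
  have key : Algebra.traceMatrix ℤ (fun i : Fin 5 => a ^ (i : ℕ)) =
      !![5, 0, 0, 0, 0; 0, 0, 0, 0, 10; 0, 0, 0, 10, 0; 0, 0, 10, 0, 0; 0, 10, 0, 0, 0] := by
    have t0 : Algebra.trace ℤ (𝓞 K) 1 = 5 := by simpa using h.trace_eq 1 0 0 0 0
    have t1 : Algebra.trace ℤ (𝓞 K) a = 0 := by simpa using h.trace_eq 0 1 0 0 0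
    have t2 : Algebra.trace ℤ (𝓞 K) (a ^ 2) = 0 := by simpa using h.trace_eq 0 0 1 0 0
    have t3 : Algebra.trace ℤ (𝓞 K) (a ^ 3) = 0 := by simpa using h.trace_eq 0 0 0 1 0
    have t4 : Algebra.trace ℤ (𝓞 K) (a ^ 4) = 0 := by simpa using h.trace_eq 0 0 0 0 1
    have t5 : Algebra.trace ℤ (𝓞 K) (a ^ 5) = 10 := by
      rw [ha]; simpa using h.trace_eq 2 0 0 0 0
    have t6 : Algebra.trace ℤ (𝓞 K) (a ^ 6) = 0 := by
      rw [show a ^ 6 = 2 * a by linear_combination a * ha]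
      simpa using h.trace_eq 0 2 0 0 0
    have t7 : Algebra.trace ℤ (𝓞 K) (a ^ 7) = 0 := by
      rw [show a ^ 7 = 2 * a ^ 2 by linear_combination a ^ 2 * ha]
      simpa using h.trace_eq 0 0 2 0 0
    have t8 : Algebra.trace ℤ (𝓞 K) (a ^ 8) = 0 := by
      rw [show a ^ 8 = 2 * a ^ 3 by linear_combination a ^ 3 * ha]
      simpa using h.trace_eq 0 0 0 2 0
    ext i j
    simp only [Algebra.traceMatrix_apply, Algebra.traceForm_apply, ← pow_add]
    fin_cases i <;> fin_cases j <;> simp [t0, t1, t2, t3, t4, t5, t6, t7, t8]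
  rw [Algebra.discr_def, key]
  simp [Matrix.det_succ_row_zero, Fin.sum_univ_succ, Fin.succAbove]

theorem abs_discr_le (h : IsFifthRootBasis a b) : |discr K| ≤ 50000 := by
  have hcard : Fintype.card (Module.Free.ChooseBasisIndex ℤ (𝓞 K)) = Fintype.card (Fin 5) := by
    rw [← Module.finrank_eq_card_chooseBasisIndex, RingOfIntegers.rank, h.finrank_eq]; rfl
  let B := (RingOfIntegers.basis K).reindex (Fintype.equivOfCardEq hcard)
  have h1 : Algebra.discr ℤ B = discr K := discr_eq_discr K B
  have h2 := Algebra.discr_of_matrix_vecMul (A := ℤ) B (B.toMatrix fun i : Fin 5 => a ^ (i : ℕ))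
  rw [Module.Basis.toMatrix_map_vecMul, h.discr_pow, h1] at h2
  have h3 : (B.toMatrix fun i : Fin 5 => a ^ (i : ℕ)).det ≠ 0 := by
    intro h0
    simp [h0] at h2
  have h4 : 1 ≤ (B.toMatrix fun i : Fin 5 => a ^ (i : ℕ)).det ^ 2 :=
    Int.add_one_le_iff.mpr (lt_of_le_of_ne (sq_nonneg _) (pow_ne_zero 2 h3).symm)
  have h5 := congrArg abs h2
  rw [abs_mul, abs_of_pos (by positivity), abs_of_nonneg (zero_le_one.trans h4)] at h5
  nlinarith [abs_nonneg (discr K)]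

end IsFifthRootBasis

theorem small_prime_field_cases {F : Type*} [Field F] {x : F} (hx : x ^ 5 = 2) {q : ℕ}
    (hq2 : 2 ≤ q) (hq : q ≤ 13) (hqF : (q : F) = 0) (hxq : x ^ q = x) :
    x = 0 ∨ 1 + x = 0 ∨ 1 + x ^ 2 = 0 ∨ 1 + x + x ^ 2 = 0 ∨ 1 + x ^ 3 - x ^ 4 = 0 := by
  by_cases h2 : (2 : F) = 0
  · left
    rw [h2] at hx
    exact eq_zero_of_pow_eq_zero hx
  have hx0 : x ≠ 0 := by
    rintro rfl
    exact h2 (by rw [← hx]; simp)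
  interval_cases q <;> push_cast at hqF
  · exact absurd hqF h2
  · have : x * ((x - 1) * (x + 1)) = 0 := by linear_combination hxq
    rcases mul_eq_zero.1 ((mul_eq_zero.1 this).resolve_left hx0) with h | h
    · have h1 : x = 1 := by linear_combination h
      rw [h1] at hx
      exact absurd (by linear_combination -2 * hx) h2
    · exact .inr (.inl (by linear_combination h))
  · exact absurd (by linear_combination hqF : (2 : F) * 2 = 0) (mul_ne_zero h2 h2)
  · have h1 : x = 2 := by linear_combination hx - hxq
    rw [h1]
    exact .inr (.inr (.inl (by linear_combination hqF)))
  · exact absurd (by linear_combination hxq - x * hx) hx0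
  · have : x * (2 * x - 1) = 0 := by linear_combination hxq - x ^ 2 * hx
    have h1 : x = 4 := by
      linear_combination 4 * ((mul_eq_zero.1 this).resolve_left hx0) - x * hqF
    rw [h1]
    exact .inr (.inr (.inr (.inl (by linear_combination 3 * hqF))))
  · exact absurd (by linear_combination hqF : (2 : F) * (2 * 2) = 0)
      (mul_ne_zero h2 (mul_ne_zero h2 h2))
  · have h3 : (3 : F) = 0 := eq_zero_of_pow_eq_zero (n := 2) (by linear_combination hqF)
    have : x * (2 * x ^ 3 - 1) = 0 := by linear_combination hxq - x ^ 4 * hx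
    refine .inr (.inl (eq_zero_of_pow_eq_zero (n := 3) ?_))
    linear_combination -((mul_eq_zero.1 this).resolve_left hx0) + (x ^ 3 + x ^ 2 + x) * h3
  · have h5 : (5 : F) = 0 :=
      (mul_eq_zero.1 (by linear_combination hqF : (2 : F) * 5 = 0)).resolve_left h2
    have h1 : x = 4 := by linear_combination -hxq + (x ^ 5 + 2) * hx
    rw [h1] at hx
    exact absurd (by linear_combination hx - 204 * h5) h2
  · have : x * 3 = 0 := by linear_combination hxq - (x ^ 6 + 2 * x) * hx
    have h3 := (mul_eq_zero.1 this).resolve_left hx0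
    exact absurd (by linear_combination 4 * h3 - hqF) (one_ne_zero (α := F))
  · have h3 : (3 : F) = 0 :=
      (mul_eq_zero.1 (by linear_combination hqF : (2 * 2 : F) * 3 = 0)).resolve_left
        (mul_ne_zero h2 h2)
    have : x * (4 * x - 1) = 0 := by linear_combination hxq - (x ^ 7 + 2 * x ^ 2) * hx
    have h1 : x = 1 := by
      linear_combination ((mul_eq_zero.1 this).resolve_left hx0) - x * h3
    rw [h1] at hx
    exact absurd (by linear_combination -2 * hx) h2
  · have : x * ((2 * x - 1) * (2 * x + 1)) = 0 := by
      linear_combination hxq - (x ^ 8 + 2 * x ^ 3) * hx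
    rcases mul_eq_zero.1 ((mul_eq_zero.1 this).resolve_left hx0) with h | h
    · have h1 : x = 7 := by linear_combination 7 * h - x * hqF
      rw [h1] at hx
      exact absurd (by linear_combination 6 * hx - 7756 * hqF) h2
    · have h1 : x = 6 := by linear_combination -6 * h + x * hqF
      rw [h1]
      exact .inr (.inr (.inr (.inr (by linear_combination -83 * hqF))))

namespace IsFifthRootBasis

variable {K : Type*} [Field K] [NumberField K] {a : 𝓞 K} {b : Module.Basis (Fin 5) ℚ K}

theorem ne_zero (h : IsFifthRootBasis a b) : a ≠ 0 := by
  rintro rfl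
  simpa using h.pow_five

theorem norm_root (h : IsFifthRootBasis a b) : Algebra.norm ℤ a = 2 := by
  have := h.norm_eq 0 1 0 0 0
  simpa [Matrix.det_succ_row_zero, Fin.sum_univ_succ, Fin.succAbove] using this

theorem norm_one_add (h : IsFifthRootBasis a b) : Algebra.norm ℤ (1 + a) = 3 := by
  have := h.norm_eq 1 1 0 0 0
  simpa [Matrix.det_succ_row_zero, Fin.sum_univ_succ, Fin.succAbove] using this

theorem norm_one_add_sq (h : IsFifthRootBasis a b) : Algebra.norm ℤ (1 + a ^ 2) = 5 := by
  have := h.norm_eq 1 0 1 0 0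
  simpa [Matrix.det_succ_row_zero, Fin.sum_univ_succ, Fin.succAbove] using this

theorem norm_one_add_add_sq (h : IsFifthRootBasis a b) :
    Algebra.norm ℤ (1 + a + a ^ 2) = 7 := by
  have := h.norm_eq 1 1 1 0 0
  simpa [Matrix.det_succ_row_zero, Fin.sum_univ_succ, Fin.succAbove] using this

theorem norm_one_add_cube_sub (h : IsFifthRootBasis a b) :
    Algebra.norm ℤ (1 + a ^ 3 - a ^ 4) = 13 := by
  have := h.norm_eq 1 0 0 1 (-1)
  simpa [Matrix.det_succ_row_zero, Fin.sum_univ_succ, Fin.succAbove, sub_eq_add_neg] using this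

end IsFifthRootBasis

theorem isMaximal_span_of_norm_prime {K : Type*} [Field K] [NumberField K] {x : 𝓞 K}
    (hx : (Algebra.norm ℤ x).natAbs.Prime) : (Ideal.span {x}).IsMaximal := by
  have hp : (Ideal.span {x}).IsPrime :=
    Ideal.isPrime_of_irreducible_absNorm (by rwa [Ideal.absNorm_span_singleton])
  refine hp.isMaximal ?_
  rw [Ne, Ideal.span_singleton_eq_bot]
  rintro rfl
  rw [Algebra.norm_zero] at hx
  exact Nat.not_prime_zero hx

namespace IsFifthRootBasis

variable {K : Type*} [Field K] [NumberField K] {a : 𝓞 K} {b : Module.Basis (Fin 5) ℚ K}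

theorem isPrincipal_of_absNorm_le (h : IsFifthRootBasis a b) {I : Ideal (𝓞 K)} (hI : I.IsPrime)
    (hI0 : I ≠ ⊥) (hn : Ideal.absNorm I ≤ 13) : I.IsPrincipal := by
  have hmax : I.IsMaximal := hI.isMaximal hI0
  have key : ∀ x : 𝓞 K, (Algebra.norm ℤ x).natAbs.Prime → x ∈ I → I.IsPrincipal := by
    intro x hx hxI
    have := (isMaximal_span_of_norm_prime hx).eq_of_le hI.ne_top
      ((Ideal.span_singleton_le_iff_mem I).2 hxI)
    exact ⟨x, this.symm⟩
  let := Ideal.Quotient.field I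
  have hfin : Finite (𝓞 K ⧸ I) := Ideal.finiteQuotientOfFreeOfNeBot I hI0
  let := Fintype.ofFinite (𝓞 K ⧸ I)
  have hcard : Fintype.card (𝓞 K ⧸ I) = Ideal.absNorm I := by
    rw [Ideal.absNorm_apply, ← Nat.card_eq_fintype_card]; rfl
  have hq0 : Ideal.absNorm I ≠ 0 := by rw [← hcard]; exact Fintype.card_ne_zero
  have hq1 : Ideal.absNorm I ≠ 1 := fun e => hI.ne_top (Ideal.absNorm_eq_one_iff.1 e)
  have hx5 : (Ideal.Quotient.mk I a) ^ 5 = 2 := by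
    rw [← map_pow, h.pow_five]; rfl
  have hqF : ((Ideal.absNorm I : ℕ) : 𝓞 K ⧸ I) = 0 := by
    rw [← hcard]; exact FiniteField.cast_card_eq_zero _
  have hxq : (Ideal.Quotient.mk I a) ^ Ideal.absNorm I = Ideal.Quotient.mk I a := by
    rw [← hcard]; exact FiniteField.pow_card _
  have hcase := small_prime_field_cases hx5 (by omega) hn hqF hxq
  simp only [← map_one (Ideal.Quotient.mk I), ← map_pow, ← map_add, ← map_sub,
    Ideal.Quotient.eq_zero_iff_mem] at hcase
  rcases hcase with hc | hc | hc | hc | hc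
  · exact key _ (by rw [h.norm_root]; norm_num) hc
  · exact key _ (by rw [h.norm_one_add]; norm_num) hc
  · exact key _ (by rw [h.norm_one_add_sq]; norm_num) hc
  · exact key _ (by rw [h.norm_one_add_add_sq]; norm_num) hc
  · exact key _ (by rw [h.norm_one_add_cube_sub]; norm_num) hc

theorem isPrincipalIdealRing (h : IsFifthRootBasis a b) : IsPrincipalIdealRing (𝓞 K) := by
  refine RingOfIntegers.isPrincipalIdealRing_of_isPrincipal_of_norm_le_of_isPrime ?_
  intro I hI hle
  refine h.isPrincipal_of_absNorm_le hI (nonZeroDivisors.coe_ne_zero I) ?_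
  rw [← Nat.lt_succ_iff, ← Nat.cast_lt (α := ℝ)]
  refine hle.trans_lt ?_
  have hd : Real.sqrt |(discr K : ℝ)| ≤ 224 := by
    rw [Real.sqrt_le_left (by norm_num)]
    have := h.abs_discr_le
    have h2 : ((|discr K| : ℤ) : ℝ) ≤ (50000 : ℤ) := Int.cast_le.2 this
    push_cast at h2
    linarith
  have hr : InfinitePlace.nrComplexPlaces K ≤ 2 := by
    have := InfinitePlace.card_add_two_mul_card_eq_rank K
    rw [h.finrank_eq] at this
    omega
  have hpi : (4 / Real.pi) ^ InfinitePlace.nrComplexPlaces K ≤ (4 / 3.14 : ℝ) ^ 2 := by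
    have h1 : 1 ≤ 4 / Real.pi := (one_le_div Real.pi_pos).2 Real.pi_le_four
    refine (pow_le_pow_right₀ h1 hr).trans ?_
    gcongr
    exact Real.pi_gt_d2.le
  rw [h.finrank_eq]
  calc _ ≤ (4 / 3.14 : ℝ) ^ 2 * ((Nat.factorial 5 : ℕ) / (5 : ℕ) ^ 5 * 224) := by gcongr
    _ < _ := by norm_num [Nat.factorial]

end IsFifthRootBasis

namespace IsFifthRootBasis

variable {K : Type*} [Field K] [NumberField K] {a : 𝓞 K} {b : Module.Basis (Fin 5) ℚ K}

theorem realEmbedding_ext (h : IsFifthRootBasis a b) {φ ψ : K →+* ℂ}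
    (hφ : ComplexEmbedding.IsReal φ) (hψ : ComplexEmbedding.IsReal ψ) : φ = ψ := by
  have hval : ∀ {χ : K →+* ℂ} (hχ : ComplexEmbedding.IsReal χ), hχ.embedding (a : K) ^ 5 = 2 := by
    intro χ hχ
    rw [← map_pow, h.coe_pow_five, map_ofNat]
  have hab : hφ.embedding (a : K) = hψ.embedding (a : K) := by
    have hodd : Odd 5 := by decide
    exact hodd.strictMono_pow.injective ((hval hφ).trans (hval hψ).symm)
  have hab' : φ (a : K) = ψ (a : K) := by
    rw [← ComplexEmbedding.IsReal.coe_embedding_apply hφ,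
      ← ComplexEmbedding.IsReal.coe_embedding_apply hψ, hab]
  have hlin : φ.toRatAlgHom.toLinearMap = ψ.toRatAlgHom.toLinearMap := by
    refine b.ext fun i => ?_
    rw [h.basis_eq]
    simp [hab']
  ext x
  exact congrArg (fun f => f x) hlin

theorem unitsRank_eq (h : IsFifthRootBasis a b) : Units.rank K = 2 := by
  have h1 : InfinitePlace.nrRealPlaces K ≤ 1 := by
    classical
    rw [← InfinitePlace.card_real_embeddings, Fintype.card_le_one_iff_subsingleton]
    exact ⟨fun x y => Subtype.ext (h.realEmbedding_ext x.2 y.2)⟩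
  have h2 := InfinitePlace.card_add_two_mul_card_eq_rank K
  rw [h.finrank_eq] at h2
  rw [Units.rank, InfinitePlace.card_eq_nrRealPlaces_add_nrComplexPlaces]
  omega

theorem exists_unit_eq (h : IsFifthRootBasis a b) {γ ε : (𝓞 K)ˣ}
    (hind : ∀ (i j k : ℕ) (v : (𝓞 K)ˣ), (-1) ^ i * γ ^ j * ε ^ k = v ^ 2 →
      Even i ∧ Even j ∧ Even k) (u : (𝓞 K)ˣ) :
    ∃ (i j k : ℕ) (v : (𝓞 K)ˣ), u = (-1) ^ i * γ ^ j * ε ^ k * v ^ 2 := by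
  have hr := h.unitsRank_eq
  have hodd : Odd (Module.finrank ℚ K) := by rw [h.finrank_eq]; decide
  have hex : ∀ x : (𝓞 K)ˣ, ∃ f : Fin 2 × (Fin (Units.rank K) → ZMod 2),
      ∃ v : (𝓞 K)ˣ, x = (-1) ^ (f.1 : ℕ) *
        (∏ i, Units.fundSystem K i ^ (f.2 i).val) * v ^ 2 := by
    intro x
    obtain ⟨⟨ζ, e⟩, hx, -⟩ := Units.exist_unique_eq_mul_prod K x
    have hζ : ∃ s : Fin 2, (ζ : (𝓞 K)ˣ) = (-1) ^ (s : ℕ) := by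
      rcases Units.torsion_eq_one_or_neg_one_of_odd_finrank hodd ζ with h1 | h1
      · exact ⟨0, by simp [h1]⟩
      · exact ⟨1, by simp [h1]⟩
    obtain ⟨s, hs⟩ := hζ
    refine ⟨(s, fun i => (e i : ZMod 2)), ∏ i, Units.fundSystem K i ^ (e i / 2), ?_⟩
    rw [hx]
    simp only [hs, mul_assoc]
    rw [← Finset.prod_pow, ← Finset.prod_mul_distrib]
    congr 1
    refine Finset.prod_congr rfl fun i _ => ?_
    rw [← zpow_natCast, ← zpow_natCast, ← zpow_mul, ← zpow_add, ZMod.val_intCast]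
    congr 1
    push_cast
    omega
  choose f v hf using hex
  let g : Fin 2 × Fin 2 × Fin 2 → (𝓞 K)ˣ := fun s => (-1) ^ (s.1 : ℕ) * γ ^ (s.2.1 : ℕ) *
    ε ^ (s.2.2 : ℕ)
  have hfe : ∀ {x y}, f x = f y → ∃ w, x = y * w ^ 2 := by
    intro x y hxy
    refine ⟨(v y)⁻¹ * v x, ?_⟩
    conv_lhs => rw [hf x, hxy]
    conv_rhs => enter [1]; rw [hf y]
    simp only [mul_pow, inv_pow, mul_assoc, mul_inv_cancel_left]
  have hinj : Function.Injective (f ∘ g) := by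
    intro s t hst
    obtain ⟨w, h1⟩ := hfe hst
    have h2 : (-1 : (𝓞 K)ˣ) ^ (s.1 + t.1 : ℕ) * γ ^ (s.2.1 + t.2.1 : ℕ) *
        ε ^ (s.2.2 + t.2.2 : ℕ) = (g t * w) ^ 2 := by
      calc _ = g s * g t := by simp only [g, pow_add]; ac_rfl
        _ = _ := by rw [h1, mul_pow, sq (g t)]; exact mul_right_comm _ _ _
    obtain ⟨e1, e2, e3⟩ := hind _ _ _ _ h2
    obtain ⟨s1, s2, s3⟩ := s
    obtain ⟨t1, t2, t3⟩ := t
    simp only [Nat.even_iff] at e1 e2 e3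
    simp only [Prod.mk.injEq, Fin.ext_iff]
    omega
  have hbij : Function.Bijective (f ∘ g) := by
    rw [Fintype.bijective_iff_injective_and_card]
    refine ⟨hinj, ?_⟩
    simp [hr]
  obtain ⟨s, hs⟩ := hbij.2 (f u)
  obtain ⟨w, hw⟩ := hfe hs.symm
  exact ⟨_, _, _, w, hw⟩

end IsFifthRootBasis

/-- `A` behaves like the ring of elements of `K` integral at a prime with uniformizer `α`, where
`α ^ 5 = 2` and the residue field has two elements. -/
structure IsDyadicSubring {K : Type*} [Field K] (A : Subring K) (α : K) : Prop where
  pow_five : α ^ 5 = 2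
  root_mem : α ∈ A
  inv_notMem : α⁻¹ ∉ A
  mem_or_inv_mem : ∀ x : K, x ∈ A ∨ x⁻¹ ∈ A
  residue : ∀ x ∈ A, (∃ r ∈ A, x = α * r) ∨ ∃ r ∈ A, x = 1 + α * r
  inv_mem : ∀ r ∈ A, (1 + α * r)⁻¹ ∈ A

/-- Fractions of algebraic integers with denominator outside the prime ideal `P`. -/
def subringAtPrime {K : Type*} [Field K] [NumberField K] (P : Ideal (𝓞 K)) [hP : P.IsPrime] :
    Subring K where
  carrier := {x | ∃ n d : 𝓞 K, d ∉ P ∧ x * algebraMap (𝓞 K) K d = algebraMap (𝓞 K) K n}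
  mul_mem' := by
    rintro x y ⟨n, d, hd, hx⟩ ⟨m, e, he, hy⟩
    refine ⟨n * m, d * e, hP.mul_notMem hd he, ?_⟩
    rw [map_mul, map_mul, ← hx, ← hy]; ring
  one_mem' := ⟨1, 1, P.ne_top_iff_one.1 hP.ne_top, by simp⟩
  add_mem' := by
    rintro x y ⟨n, d, hd, hx⟩ ⟨m, e, he, hy⟩
    refine ⟨n * e + m * d, d * e, hP.mul_notMem hd he, ?_⟩
    rw [map_add, map_mul, map_mul, map_mul, ← hx, ← hy]; ring
  zero_mem' := ⟨0, 1, P.ne_top_iff_one.1 hP.ne_top, by simp⟩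
  neg_mem' := by
    rintro x ⟨n, d, hd, hx⟩
    exact ⟨-n, d, hd, by rw [map_neg, ← hx, neg_mul]⟩

theorem algebraMap_mem_subringAtPrime {K : Type*} [Field K] [NumberField K] (P : Ideal (𝓞 K))
    [hP : P.IsPrime] (n : 𝓞 K) : algebraMap (𝓞 K) K n ∈ subringAtPrime P :=
  ⟨n, 1, P.ne_top_iff_one.1 hP.ne_top, by simp⟩

theorem IsFifthRootBasis.exists_isDyadicSubring {K : Type*} [Field K] [NumberField K] {a : 𝓞 K}
    {b : Module.Basis (Fin 5) ℚ K} (h : IsFifthRootBasis a b) :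
    ∃ A : Subring K, IsDyadicSubring A (algebraMap (𝓞 K) K a) ∧
      ∀ n : 𝓞 K, algebraMap (𝓞 K) K n ∈ A := by
  have hPID := h.isPrincipalIdealRing
  have hmax : (Ideal.span {a}).IsMaximal :=
    isMaximal_span_of_norm_prime (by rw [h.norm_root]; norm_num)
  have hP : (Ideal.span {a}).IsPrime := hmax.isPrime
  have hprime : Prime a := (Ideal.span_singleton_prime h.ne_zero).1 hP
  have ha0 : algebraMap (𝓞 K) K a ≠ 0 := by
    simpa using h.ne_zero
  have hcard : Ideal.absNorm (Ideal.span {a}) = 2 := by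
    rw [Ideal.absNorm_span_singleton, h.norm_root]; rfl
  have hres : ∀ n : 𝓞 K, a ∣ n ∨ a ∣ n - 1 := by
    intro n
    let := Ideal.Quotient.field (Ideal.span {a})
    have hfin : Finite (𝓞 K ⧸ Ideal.span {a}) :=
      Ideal.finiteQuotientOfFreeOfNeBot _ (by simpa using h.ne_zero)
    let := Fintype.ofFinite (𝓞 K ⧸ Ideal.span {a})
    have hc : Fintype.card (𝓞 K ⧸ Ideal.span {a}) = 2 := by
      rw [← hcard, Ideal.absNorm_apply, ← Nat.card_eq_fintype_card]; rfl
    have hn := FiniteField.pow_card (Ideal.Quotient.mk (Ideal.span {a}) n)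
    rw [hc, ← map_pow, ← sub_eq_zero, ← map_sub, Ideal.Quotient.eq_zero_iff_mem,
      Ideal.mem_span_singleton, show n ^ 2 - n = n * (n - 1) by ring] at hn
    exact hprime.dvd_or_dvd hn
  have hmem : ∀ {x : K}, x ∈ subringAtPrime (Ideal.span {a}) ↔
      ∃ n d : 𝓞 K, ¬ a ∣ d ∧ x * algebraMap (𝓞 K) K d = algebraMap (𝓞 K) K n := by
    intro x
    simp only [← Ideal.mem_span_singleton]
    rfl
  have hnz : ∀ {d : 𝓞 K}, ¬ a ∣ d → algebraMap (𝓞 K) K d ≠ 0 := by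
    intro d hd h0
    have : d = 0 := by simpa using h0
    exact hd (this ▸ dvd_zero a)
  refine ⟨subringAtPrime (Ideal.span {a}), ⟨h.coe_pow_five, algebraMap_mem_subringAtPrime _ a,
    ?_, ?_, ?_, ?_⟩, algebraMap_mem_subringAtPrime _⟩
  · rw [hmem]
    rintro ⟨n, d, hd, hx⟩
    refine hd ⟨n, FaithfulSMul.algebraMap_injective (𝓞 K) K ?_⟩
    rw [map_mul, ← hx, mul_inv_cancel_left₀ ha0]
  · intro x
    obtain ⟨n, ⟨d, hd0⟩, hrel, rfl⟩ := IsFractionRing.exists_reduced_fraction (𝓞 K) x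
    have hd : algebraMap (𝓞 K) K d ≠ 0 := by
      simpa using nonZeroDivisors.ne_zero hd0
    rw [IsFractionRing.mk'_eq_div, hmem, hmem]
    by_cases had : a ∣ d
    · have han : ¬ a ∣ n := fun han => hprime.not_isUnit (hrel han had)
      have := hnz han
      exact .inr ⟨d, n, han, by field_simp⟩
    · exact .inl ⟨n, d, had, by field_simp⟩
  · intro x hx
    obtain ⟨n, d, hd, hx⟩ := hmem.1 hx
    have hd0 := hnz hd
    rcases hres n with ⟨m, hm⟩ | ⟨m, hm⟩
    · left
      refine ⟨algebraMap (𝓞 K) K m / algebraMap (𝓞 K) K d, hmem.2 ⟨m, d, hd, by field_simp⟩, ?_⟩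
      rw [eq_div_of_mul_eq hd0 hx, hm, map_mul]
      ring
    · right
      obtain ⟨e, he⟩ := (hres d).resolve_left hd
      refine ⟨algebraMap (𝓞 K) K (m - e) / algebraMap (𝓞 K) K d,
        hmem.2 ⟨m - e, d, hd, by field_simp⟩, ?_⟩
      have h1 := congrArg (algebraMap (𝓞 K) K) hm
      have h2 := congrArg (algebraMap (𝓞 K) K) he
      simp only [map_sub, map_mul, map_one] at h1 h2 ⊢
      field_simp
      linear_combination hx + h1 - h2
  · intro r hr
    obtain ⟨n, d, hd, hx⟩ := hmem.1 hr
    have hd' : ¬ a ∣ d + a * n := by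
      rwa [dvd_add_left (dvd_mul_right a n)]
    refine hmem.2 ⟨d, d + a * n, hd', ?_⟩
    have h1 : algebraMap (𝓞 K) K (d + a * n) =
        (1 + algebraMap (𝓞 K) K a * r) * algebraMap (𝓞 K) K d := by
      rw [map_add, map_mul, ← hx]; ring
    have h0 := hnz hd'
    rw [h1] at h0 ⊢
    rw [inv_mul_cancel_left₀ (left_ne_zero_of_mul h0)]

/-- Coordinates with respect to the powers `1, α, α ^ 2, α ^ 3, α ^ 4` of a fifth root of two. -/
structure Quintic where
  c₀ : ℤ
  c₁ : ℤ
  c₂ : ℤ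
  c₃ : ℤ
  c₄ : ℤ

namespace Quintic

/-- Multiplication of coordinate vectors. -/
def mul (x y : Quintic) : Quintic where
  c₀ := x.c₀ * y.c₀ + 2 * (x.c₁ * y.c₄ + x.c₂ * y.c₃ + x.c₃ * y.c₂ + x.c₄ * y.c₁)
  c₁ := x.c₀ * y.c₁ + x.c₁ * y.c₀ + 2 * (x.c₂ * y.c₄ + x.c₃ * y.c₃ + x.c₄ * y.c₂)
  c₂ := x.c₀ * y.c₂ + x.c₁ * y.c₁ + x.c₂ * y.c₀ + 2 * (x.c₃ * y.c₄ + x.c₄ * y.c₃)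
  c₃ := x.c₀ * y.c₃ + x.c₁ * y.c₂ + x.c₂ * y.c₁ + x.c₃ * y.c₀ + 2 * (x.c₄ * y.c₄)
  c₄ := x.c₀ * y.c₄ + x.c₁ * y.c₃ + x.c₂ * y.c₂ + x.c₃ * y.c₁ + x.c₄ * y.c₀

/-- The element with the given coordinates. -/
def eval {K : Type*} [Field K] (α : K) (x : Quintic) : K :=
  x.c₀ + x.c₁ * α + x.c₂ * α ^ 2 + x.c₃ * α ^ 3 + x.c₄ * α ^ 4

theorem eval_mul {K : Type*} [Field K] {α : K} (hα : α ^ 5 = 2) (x y : Quintic) :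
    (x.mul y).eval α = x.eval α * y.eval α := by
  simp only [eval, mul]
  push_cast
  linear_combination -(x.c₁ * y.c₄ + x.c₂ * y.c₃ + x.c₃ * y.c₂ + x.c₄ * y.c₁ +
    (x.c₂ * y.c₄ + x.c₃ * y.c₃ + x.c₄ * y.c₂) * α + (x.c₃ * y.c₄ + x.c₄ * y.c₃) * α ^ 2 +
    x.c₄ * y.c₄ * α ^ 3 : K) * hα

/-- Congruence to one modulo `α ^ 11`, in coordinates. -/
def IsOneMod (x : Quintic) : Prop :=
  8 ∣ x.c₀ - 1 ∧ 4 ∣ x.c₁ ∧ 4 ∣ x.c₂ ∧ 4 ∣ x.c₃ ∧ 4 ∣ x.c₄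

instance (x : Quintic) : Decidable x.IsOneMod := by
  unfold IsOneMod; infer_instance

/-- Coordinates of `1 + e₁ α + e₂ α ^ 2 + e₃ α ^ 3 + e₄ α ^ 4` with digits `0` and `1`. -/
def ofDigits (e₁ e₂ e₃ e₄ : Fin 2) : Quintic := ⟨1, e₁.val, e₂.val, e₃.val, e₄.val⟩

/-- Coordinates of `(-1) ^ i * (α - 1) ^ j * (1 + α + α ^ 3) ^ k * 5 ^ l`. -/
def ofExponents (i j k l : Fin 2) : Quintic :=
  (((if i = 0 then ⟨1, 0, 0, 0, 0⟩ else ⟨-1, 0, 0, 0, 0⟩ : Quintic).mul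
    (if j = 0 then ⟨1, 0, 0, 0, 0⟩ else ⟨-1, 1, 0, 0, 0⟩)).mul
    (if k = 0 then ⟨1, 0, 0, 0, 0⟩ else ⟨1, 1, 0, 1, 0⟩)).mul
    (if l = 0 then ⟨1, 0, 0, 0, 0⟩ else ⟨5, 0, 0, 0, 0⟩)

theorem eval_ofExponents {K : Type*} [Field K] {α : K} (hα : α ^ 5 = 2) (i j k l : Fin 2) :
    (ofExponents i j k l).eval α =
      (-1) ^ i.val * (α - 1) ^ j.val * (1 + α + α ^ 3) ^ k.val * 5 ^ l.val := by
  rw [ofExponents, eval_mul hα, eval_mul hα, eval_mul hα]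
  congr 1
  · congr 1
    · congr 1
      · fin_cases i <;> simp [eval]
      · fin_cases j <;> simp [eval]; ring
    · fin_cases k <;> simp [eval]
  · fin_cases l <;> simp [eval]

set_option maxRecDepth 100000 in
theorem exponents_eq_zero : ∀ e₁ e₂ e₃ e₄ i j k l : Fin 2,
    ((ofExponents i j k l).mul ((ofDigits e₁ e₂ e₃ e₄).mul (ofDigits e₁ e₂ e₃ e₄))).IsOneMod →
      i = 0 ∧ j = 0 ∧ k = 0 ∧ l = 0 := by
  decide +kernel

theorem ofExponents_odd : ∀ i j k l : Fin 2, 2 ∣ (ofExponents i j k l).c₀ - 1 := by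
  decide

end Quintic

namespace IsDyadicSubring

variable {K : Type*} [Field K] {A : Subring K} {α : K}

theorem ne_zero (h : IsDyadicSubring A α) : α ≠ 0 := by
  rintro rfl
  exact h.inv_notMem (by simp [A.zero_mem])

theorem two_ne_zero (h : IsDyadicSubring A α) : (2 : K) ≠ 0 := by
  rw [← h.pow_five]
  exact pow_ne_zero 5 h.ne_zero

theorem mul_ne_one (h : IsDyadicSubring A α) {r : K} (hr : r ∈ A) : α * r ≠ 1 := by
  intro e
  apply h.inv_notMem
  rwa [← eq_inv_of_mul_eq_one_right e]

theorem mem_of_sq_mem (h : IsDyadicSubring A α) {x : K} (hx : x ^ 2 ∈ A) : x ∈ A := by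
  rcases h.mem_or_inv_mem x with h1 | h1
  · exact h1
  · have := A.mul_mem hx h1
    by_cases hx0 : x = 0
    · rw [hx0]; exact A.zero_mem
    · rwa [sq, mul_inv_cancel_right₀ hx0] at this

theorem peel (h : IsDyadicSubring A α) {c₀ c₁ c₂ c₃ c₄ : ℤ} {n : ℕ} {r : K} (hr : r ∈ A)
    (he : Quintic.eval α ⟨c₀, c₁, c₂, c₃, c₄⟩ = α ^ (n + 1) * r) :
    ∃ k : ℤ, c₀ = 2 * k ∧ Quintic.eval α ⟨c₁, c₂, c₃, c₄, k⟩ = α ^ n * r := by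
  have hα := h.pow_five
  simp only [Quintic.eval] at he ⊢
  rcases Int.even_or_odd' c₀ with ⟨k, hk | hk⟩
  · refine ⟨k, hk, mul_left_cancel₀ h.ne_zero ?_⟩
    rw [hk] at he
    push_cast at he
    linear_combination he + k * hα
  · exfalso
    rw [hk] at he
    push_cast at he
    refine h.mul_ne_one (r := α ^ n * r - c₁ - c₂ * α - c₃ * α ^ 2 - c₄ * α ^ 3 - α ^ 4 * k) ?_ ?_
    · have := h.root_mem
      exact A.sub_mem (A.sub_mem (A.sub_mem (A.sub_mem (A.sub_mem (by aesop) (by simp))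
        (by aesop)) (by aesop)) (by aesop)) (by aesop)
    · linear_combination -he - k * hα

theorem coord_dvd (h : IsDyadicSubring A α) {x : Quintic} {r : K} (hr : r ∈ A)
    (he : x.eval α = α ^ 11 * r) :
    8 ∣ x.c₀ ∧ 4 ∣ x.c₁ ∧ 4 ∣ x.c₂ ∧ 4 ∣ x.c₃ ∧ 4 ∣ x.c₄ := by
  obtain ⟨c₀, c₁, c₂, c₃, c₄⟩ := x
  obtain ⟨k₀, h₀, he⟩ := h.peel hr he
  obtain ⟨k₁, h₁, he⟩ := h.peel hr he
  obtain ⟨k₂, h₂, he⟩ := h.peel hr he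
  obtain ⟨k₃, h₃, he⟩ := h.peel hr he
  obtain ⟨k₄, h₄, he⟩ := h.peel hr he
  obtain ⟨m₀, g₀, he⟩ := h.peel hr he
  obtain ⟨m₁, g₁, he⟩ := h.peel hr he
  obtain ⟨m₂, g₂, he⟩ := h.peel hr he
  obtain ⟨m₃, g₃, he⟩ := h.peel hr he
  obtain ⟨m₄, g₄, he⟩ := h.peel hr he
  obtain ⟨n₀, f₀, -⟩ := h.peel hr he
  simp only
  omega

theorem isOneMod (h : IsDyadicSubring A α) {x : Quintic} {r : K} (hr : r ∈ A)
    (he : x.eval α = 1 + α ^ 11 * r) : x.IsOneMod := by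
  refine h.coord_dvd (x := ⟨x.c₀ - 1, x.c₁, x.c₂, x.c₃, x.c₄⟩) hr ?_
  simp only [Quintic.eval] at he ⊢
  push_cast
  linear_combination he

theorem exists_digit (h : IsDyadicSubring A α) {x : K} (hx : x ∈ A) :
    ∃ e : Fin 2, ∃ r ∈ A, x = e.val + α * r := by
  rcases h.residue x hx with ⟨r, hr, e⟩ | ⟨r, hr, e⟩
  · exact ⟨0, r, hr, by simpa using e⟩
  · exact ⟨1, r, hr, by simpa using e⟩

theorem eval_mem (h : IsDyadicSubring A α) (x : Quintic) : x.eval α ∈ A := by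
  have hA := h.root_mem
  simp only [Quintic.eval]
  exact A.add_mem (A.add_mem (A.add_mem (A.add_mem (by simp) (by aesop)) (by aesop)) (by aesop))
    (by aesop)

theorem eval_eq_one_add (h : IsDyadicSubring A α) {x : Quintic} (hx : 2 ∣ x.c₀ - 1) :
    ∃ r ∈ A, x.eval α = 1 + α * r := by
  obtain ⟨m, hm⟩ := hx
  refine ⟨Quintic.eval α ⟨x.c₁, x.c₂, x.c₃, x.c₄, m⟩, h.eval_mem _, ?_⟩
  have hm' : x.c₀ = 1 + 2 * m := by omega
  simp only [Quintic.eval, hm']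
  push_cast
  linear_combination -m * h.pow_five

/-- A unit square agrees modulo `α ^ 11` with the square of a truncated digit expansion. -/
theorem exists_sq_digits (h : IsDyadicSubring A α) {x r : K} (hr : r ∈ A)
    (hx : x = 1 + α * r) : ∃ e₁ e₂ e₃ e₄ : Fin 2, ∃ s ∈ A,
      x ^ 2 = (Quintic.ofDigits e₁ e₂ e₃ e₄).eval α ^ 2 + α ^ 11 * s := by
  have hα := h.pow_five
  have hA := h.root_mem
  obtain ⟨e₁, r₁, hr₁, rfl⟩ := h.exists_digit hr
  obtain ⟨e₂, r₂, hr₂, rfl⟩ := h.exists_digit hr₁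
  obtain ⟨e₃, r₃, hr₃, rfl⟩ := h.exists_digit hr₂
  obtain ⟨e₄, r₄, hr₄, rfl⟩ := h.exists_digit hr₃
  refine ⟨e₁, e₂, e₃, e₄, ?_⟩
  set q : K := e₁.val + e₂.val * α + e₃.val * α ^ 2 + e₄.val * α ^ 3 with hq
  have hqA : q ∈ A := by
    rw [hq]
    exact A.add_mem (A.add_mem (A.add_mem (by simp) (by aesop)) (by aesop)) (by aesop)
  have hw : (Quintic.ofDigits e₁ e₂ e₃ e₄).eval α = 1 + α * q := by
    simp only [Quintic.ofDigits, Quintic.eval, hq]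
    push_cast
    ring
  have hx' : x = 1 + α * q + α ^ 5 * r₄ := by rw [hx, hq]; ring
  rw [hw]
  have key : ∃ s ∈ A, r₄ * (1 + α * q + r₄) = α * s := by
    rcases h.residue r₄ hr₄ with ⟨s, hs, e⟩ | ⟨s, hs, e⟩
    · refine ⟨s * (1 + α * q + r₄), ?_, by rw [e]; ring⟩
      exact A.mul_mem hs (A.add_mem (A.add_mem A.one_mem (A.mul_mem hA hqA)) hr₄)
    · refine ⟨r₄ * (q + α ^ 4 + s), ?_, ?_⟩
      · exact A.mul_mem hr₄ (A.add_mem (A.add_mem hqA (A.pow_mem hA 4)) hs)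
      · linear_combination r₄ * e - r₄ * hα
  obtain ⟨s, hs, hk⟩ := key
  refine ⟨s, hs, ?_⟩
  rw [hx']
  linear_combination α ^ 10 * hk - (1 + α * q) * r₄ * α ^ 5 * hα

/-- Signs, the units `α - 1`, `1 + α + α ^ 3`, and `5` are independent modulo squares at the
dyadic place. -/
theorem even_exponents (h : IsDyadicSubring A α) {i j k l : ℕ} {x r : K} (hr : r ∈ A)
    (hx : (-1) ^ i * (α - 1) ^ j * (1 + α + α ^ 3) ^ k * 5 ^ l * x ^ 2 = 1 + α ^ 11 * r) :
    Even i ∧ Even j ∧ Even k ∧ Even l := by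
  have hα := h.pow_five
  have hA := h.root_mem
  let f : ℕ → Fin 2 := fun n => ⟨n % 2, Nat.mod_lt _ (by norm_num)⟩
  have hf : ∀ n, (f n).val = n % 2 := fun n => rfl
  let u := (Quintic.ofExponents (f i) (f j) (f k) (f l)).eval α
  have hu : u = (-1) ^ (i % 2) * (α - 1) ^ (j % 2) * (1 + α + α ^ 3) ^ (k % 2) * 5 ^ (l % 2) := by
    rw [← hf, ← hf, ← hf, ← hf]
    exact Quintic.eval_ofExponents hα _ _ _ _
  let z := (-1) ^ (i / 2) * (α - 1) ^ (j / 2) * (1 + α + α ^ 3) ^ (k / 2) * 5 ^ (l / 2) * x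
  have hsplit : ∀ (c : K) (n : ℕ), c ^ n = c ^ (n % 2) * (c ^ (n / 2)) ^ 2 := by
    intro c n
    rw [← pow_mul, ← pow_add]
    congr 1
    omega
  have hz : u * z ^ 2 = 1 + α ^ 11 * r := by
    rw [← hx, hu]
    rw [hsplit (-1) i, hsplit (α - 1) j, hsplit (1 + α + α ^ 3) k, hsplit 5 l]
    simp only [z]
    ring
  have huA : u ∈ A := h.eval_mem _
  obtain ⟨ρ, hρ, huρ⟩ := h.eval_eq_one_add (Quintic.ofExponents_odd (f i) (f j) (f k) (f l))
  have huinv : u⁻¹ ∈ A := by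
    simp only [u, huρ]; exact h.inv_mem ρ hρ
  have hu0 : u ≠ 0 := by
    intro h0
    refine h.mul_ne_one (A.neg_mem hρ) ?_
    linear_combination huρ - h0
  have hzA : z ∈ A := by
    apply h.mem_of_sq_mem
    rw [← inv_mul_cancel_left₀ hu0 (z ^ 2), hz]
    exact A.mul_mem huinv (A.add_mem A.one_mem (A.mul_mem (A.pow_mem hA _) hr))
  rcases h.residue z hzA with ⟨s, hs, hzs⟩ | ⟨s, hs, hzs⟩
  · exfalso
    refine h.mul_ne_one (r := u * (α * s ^ 2) - α ^ 10 * r) ?_ ?_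
    · exact A.sub_mem (A.mul_mem huA (A.mul_mem hA (A.pow_mem hs _)))
        (A.mul_mem (A.pow_mem hA _) hr)
    · rw [hzs] at hz
      linear_combination hz
  · obtain ⟨e₁, e₂, e₃, e₄, t, ht, hzt⟩ := h.exists_sq_digits hs hzs
    have hone := h.isOneMod (x := (Quintic.ofExponents (f i) (f j) (f k) (f l)).mul
      ((Quintic.ofDigits e₁ e₂ e₃ e₄).mul (Quintic.ofDigits e₁ e₂ e₃ e₄))) (r := r - u * t)
      (A.sub_mem hr (A.mul_mem huA ht)) (by
        rw [Quintic.eval_mul hα, Quintic.eval_mul hα]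
        linear_combination hz - u * hzt)
    have hzero := Quintic.exponents_eq_zero _ _ _ _ _ _ _ _ hone
    simp only [Fin.ext_iff, hf] at hzero
    exact ⟨Nat.even_iff.2 hzero.1, Nat.even_iff.2 hzero.2.1, Nat.even_iff.2 hzero.2.2.1,
      Nat.even_iff.2 hzero.2.2.2⟩

end IsDyadicSubring

theorem associated_prime_pow_mul_sq {R : Type*} [CommRing R] [IsDomain R] [IsPrincipalIdealRing R]
    {π n d B c z : R} {N : ℕ} (hπ : Prime π) (hc : c ∣ π ^ N) (hn : n ≠ 0) (hd : d ≠ 0)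
    (hnd : IsRelPrime n d) (hz : n * d * (n ^ 2 + B * n * d + c * d ^ 2) = z ^ 2) :
    ∃ (i : ℕ) (x : R), Associated (π ^ i * x ^ 2) (n * d) := by
  have hfin : FiniteMultiplicity π (n * d) :=
    FiniteMultiplicity.of_prime_left hπ (mul_ne_zero hn hd)
  obtain ⟨m, hm, hπm⟩ := hfin.exists_eq_pow_mul_and_not_dvd
  set i := multiplicity π (n * d)
  have hm0 : m ≠ 0 := by
    rintro rfl
    exact hπm (dvd_zero π)
  have hnotdvd : ∀ p, Prime p → p ∣ m → ¬ p ∣ π := by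
    intro p hp hpm hpπ
    exact hπm ((hp.associated_of_dvd hπ hpπ).symm.dvd.trans hpm)
  have hcop1 : IsCoprime m π := isCoprime_of_prime_dvd (fun h => hm0 h.1) hnotdvd
  have hcop2 : IsCoprime m (n ^ 2 + B * n * d + c * d ^ 2) := by
    refine isCoprime_of_prime_dvd (fun h => hm0 h.1) ?_
    intro p hp hpm hpq
    have hpc : p ∣ c → False := fun h => hnotdvd p hp hpm (hp.dvd_of_dvd_pow (h.trans hc))
    have hrel : p ∣ n → p ∣ d → False := fun h1 h2 => hp.not_isUnit (hnd h1 h2)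
    have hpnd : p ∣ n * d := by rw [hm]; exact hpm.mul_left _
    rcases hp.dvd_or_dvd hpnd with h1 | h1
    · have h2 : p ∣ c * d ^ 2 := by
        rw [show c * d ^ 2 = n ^ 2 + B * n * d + c * d ^ 2 - n * (n + B * d) by ring]
        exact dvd_sub hpq (h1.mul_right _)
      rcases hp.dvd_or_dvd h2 with h3 | h3
      · exact hpc h3
      · exact hrel h1 (hp.dvd_of_dvd_pow h3)
    · have h2 : p ∣ n ^ 2 := by
        rw [show n ^ 2 = n ^ 2 + B * n * d + c * d ^ 2 - d * (B * n + c * d) by ring]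
        exact dvd_sub hpq (h1.mul_right _)
      exact hrel (hp.dvd_of_dvd_pow h2) h1
  have hcop := (hcop1.pow_right (n := i)).mul_right hcop2
  obtain ⟨x, hx⟩ := exists_associated_pow_of_mul_eq_pow' hcop (c := z) (k := 2) (by
    rw [← hz, hm]; ring)
  exact ⟨i, x, by rw [hm]; exact hx.mul_left _⟩

namespace IsFifthRootBasis

variable {K : Type*} [Field K] [NumberField K] {a : 𝓞 K} {b : Module.Basis (Fin 5) ℚ K}

/-- The unit `a - 1`. -/
def unitSub (h : IsFifthRootBasis a b) : (𝓞 K)ˣ :=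
  ⟨a - 1, 1 + a + a ^ 2 + a ^ 3 + a ^ 4, by linear_combination h.pow_five,
    by linear_combination h.pow_five⟩

/-- The unit `1 + a + a ^ 3`. -/
def unitAdd (h : IsFifthRootBasis a b) : (𝓞 K)ˣ :=
  ⟨1 + a + a ^ 3, 1 - a - a ^ 2 + a ^ 4, by linear_combination (a ^ 2) * h.pow_five,
    by linear_combination (a ^ 2) * h.pow_five⟩

/-- The unit `(1 + a ^ 2) ^ 5 / 5`. -/
def unitFive (h : IsFifthRootBasis a b) : (𝓞 K)ˣ :=
  ⟨1 + 4 * a + a ^ 2 + 2 * a ^ 3 + 2 * a ^ 4, -3 - 6 * a - a ^ 2 + 4 * a ^ 3 + 3 * a ^ 4,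
    by linear_combination (6 * a ^ 3 + 14 * a ^ 2 + 9 * a + 2) * h.pow_five,
    by linear_combination (6 * a ^ 3 + 14 * a ^ 2 + 9 * a + 2) * h.pow_five⟩

theorem one_add_sq_pow_five (h : IsFifthRootBasis a b) :
    (1 + a ^ 2) ^ 5 = 5 * (h.unitFive : 𝓞 K) := by
  simp only [unitFive]
  linear_combination (a ^ 5 + 5 * a ^ 3 + 10 * a + 2) * h.pow_five

theorem unit_eq (h : IsFifthRootBasis a b) (u : (𝓞 K)ˣ) :
    ∃ (i j k : ℕ) (v : (𝓞 K)ˣ), u = (-1) ^ i * h.unitSub ^ j * h.unitAdd ^ k * v ^ 2 := by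
  obtain ⟨A, hA, hAint⟩ := h.exists_isDyadicSubring
  refine h.exists_unit_eq ?_ u
  intro i j k v hv
  have h1 : (-1) ^ i * h.unitSub ^ j * h.unitAdd ^ k * v⁻¹ ^ 2 = 1 := by
    rw [hv, inv_pow, mul_inv_cancel]
  have h2 := congrArg (fun w : (𝓞 K)ˣ => algebraMap (𝓞 K) K w) h1
  have h3 := hA.even_exponents (i := i) (j := j) (k := k) (l := 0)
    (x := algebraMap (𝓞 K) K (v⁻¹ : (𝓞 K)ˣ)) A.zero_mem (by
      simpa [unitSub, unitAdd] using h2)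
  exact ⟨h3.1, h3.2.1, h3.2.2.1⟩

theorem exists_eq_mul_sq (h : IsFifthRootBasis a b) {α t y B : K} (hα : α = algebraMap (𝓞 K) K a)
    (hB : IsIntegral ℤ B) (ht : t ≠ 0)
    (hy : y ^ 2 = t * (t ^ 2 + B * t + 5 * (α - 1) ^ 2)) :
    ∃ (i j k l : ℕ) (β : K), β ≠ 0 ∧
      t = (-1) ^ i * (α - 1) ^ j * (1 + α + α ^ 3) ^ k * 5 ^ l * β ^ 2 := by
  have hPID := h.isPrincipalIdealRing
  subst hα
  obtain ⟨B, rfl⟩ : ∃ B' : 𝓞 K, algebraMap (𝓞 K) K B' = B := ⟨⟨B, hB⟩, rfl⟩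
  obtain ⟨n, ⟨d, hd0⟩, hrel, rfl⟩ := IsFractionRing.exists_reduced_fraction (𝓞 K) t
  have hd1 : d ≠ 0 := nonZeroDivisors.ne_zero hd0
  have hd : algebraMap (𝓞 K) K d ≠ 0 := by simpa using hd1
  rw [IsFractionRing.mk'_eq_div] at ht hy ⊢
  simp only at ht hy hrel ⊢
  have hn1 : n ≠ 0 := by
    rintro rfl
    simp at ht
  have hn : algebraMap (𝓞 K) K n ≠ 0 := by simpa using hn1
  have hz : (y * algebraMap (𝓞 K) K d ^ 2) ^ 2 = algebraMap (𝓞 K) K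
      (n * d * (n ^ 2 + B * n * d + (5 * (a - 1) ^ 2) * d ^ 2)) := by
    rw [mul_pow, hy]
    simp only [map_mul, map_add, map_pow, map_sub, map_one, map_ofNat]
    field_simp
  have hzint : IsIntegral ℤ (y * algebraMap (𝓞 K) K d ^ 2) := by
    refine IsIntegral.of_pow (n := 2) (by norm_num) ?_
    rw [hz]
    exact RingOfIntegers.isIntegral_coe _
  obtain ⟨z, hz'⟩ : ∃ z : 𝓞 K, algebraMap (𝓞 K) K z = y * algebraMap (𝓞 K) K d ^ 2 :=
    ⟨⟨_, hzint⟩, rfl⟩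
  rw [← hz', ← map_pow] at hz
  have hz2 := (FaithfulSMul.algebraMap_injective (𝓞 K) K hz).symm
  have hmax : (Ideal.span {1 + a ^ 2}).IsMaximal :=
    isMaximal_span_of_norm_prime (by rw [h.norm_one_add_sq]; norm_num)
  have h50 : 1 + a ^ 2 ≠ 0 := by
    intro h0
    have := h.norm_one_add_sq
    rw [h0, Algebra.norm_zero] at this
    norm_num at this
  have hprime : Prime (1 + a ^ 2) := (Ideal.span_singleton_prime h50).1 hmax.isPrime
  have hc : 5 * (a - 1) ^ 2 ∣ (1 + a ^ 2) ^ 5 := by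
    rw [h.one_add_sq_pow_five]
    refine mul_dvd_mul_left 5 ?_
    exact ((h.unitSub ^ 2).isUnit.dvd : ((h.unitSub ^ 2 : (𝓞 K)ˣ) : 𝓞 K) ∣ _)
  obtain ⟨i, x, u, hu⟩ := associated_prime_pow_mul_sq hprime hc hn1 hd1 hrel hz2
  obtain ⟨e₁, e₂, e₃, v, hv⟩ := h.unit_eq (u * h.unitFive ^ i)
  set p := algebraMap (𝓞 K) K (1 + a ^ 2) with hp
  have hp0 : p ≠ 0 := (map_ne_zero_iff _ (FaithfulSMul.algebraMap_injective (𝓞 K) K)).2 h50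
  have H5 := congrArg (algebraMap (𝓞 K) K) h.one_add_sq_pow_five
  have Hu := congrArg (algebraMap (𝓞 K) K) hu
  have Hv := congrArg (fun w : (𝓞 K)ˣ => algebraMap (𝓞 K) K w) hv
  simp only [Units.val_mul, Units.val_pow_eq_pow_val, Units.val_neg, Units.val_one, map_mul,
    map_pow, map_neg, map_one, map_ofNat, ← hp] at H5 Hu Hv
  have hγ : algebraMap (𝓞 K) K (h.unitSub : 𝓞 K) = algebraMap (𝓞 K) K a - 1 := by simp [unitSub]
  have hε : algebraMap (𝓞 K) K (h.unitAdd : 𝓞 K) =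
      1 + algebraMap (𝓞 K) K a + algebraMap (𝓞 K) K a ^ 3 := by simp [unitAdd]
  rw [hγ, hε] at Hv
  set V := algebraMap (𝓞 K) K (v : 𝓞 K)
  set X := algebraMap (𝓞 K) K x
  set U := algebraMap (𝓞 K) K (u : 𝓞 K)
  set W := algebraMap (𝓞 K) K (h.unitFive : 𝓞 K)
  set D := algebraMap (𝓞 K) K d
  set M := algebraMap (𝓞 K) K n
  refine ⟨e₁, e₂, e₃, i, V * X / (D * (p ^ i) ^ 2), ?_, ?_⟩
  · have hV : V ≠ 0 := by simp [V]
    have hX : X ≠ 0 := by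
      intro h0
      rw [h0] at Hu
      exact mul_ne_zero hn hd (by rw [← Hu]; ring)
    positivity
  · have h5i : (p ^ i) ^ 5 = 5 ^ i * W ^ i := by
      rw [← mul_pow, ← H5, ← pow_mul, ← pow_mul, mul_comm]
    have hpi : p ^ i ≠ 0 := pow_ne_zero _ hp0
    field_simp
    linear_combination -(p ^ i) ^ 4 * Hu + X ^ 2 * U * h5i + X ^ 2 * 5 ^ i * Hv

end IsFifthRootBasis

/-- A nonzero product of a sign, powers of `α - 1`, `1 + α + α ^ 3` and `5`, and a square. -/
def IsUnitFiveMulSq {K : Type*} [Field K] (α t : K) : Prop :=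
  ∃ (i j k l : ℕ) (β : K), β ≠ 0 ∧
    t = (-1) ^ i * (α - 1) ^ j * (1 + α + α ^ 3) ^ k * 5 ^ l * β ^ 2

theorem IsUnitFiveMulSq.neg_mul {K : Type*} [Field K] {α t : K} (ht : IsUnitFiveMulSq α t) :
    IsUnitFiveMulSq α (-((α - 1) * (1 + α + α ^ 3)) * t) := by
  obtain ⟨i, j, k, l, β, hβ, rfl⟩ := ht
  exact ⟨i + 1, j + 1, k + 1, l, β, hβ, by ring⟩

namespace IsDyadicSubring

variable {K : Type*} [Field K] {A : Subring K} {α : K}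

theorem one_add_ne_zero (h : IsDyadicSubring A α) (r : A) : 1 + α * (r : K) ≠ 0 := by
  intro h0
  exact h.mul_ne_one (A.neg_mem r.2) (by linear_combination -h0)

theorem exists_inv (h : IsDyadicSubring A α) (r : A) : ∃ s : A, (1 + α * (r : K)) * s = 1 :=
  ⟨⟨_, h.inv_mem r r.2⟩, mul_inv_cancel₀ (h.one_add_ne_zero r)⟩

/-- One of the roots of a quadratic polynomial congruent to `x ^ 2 - x` modulo `α` is a unit,
and it is close to every approximate unit root. -/
theorem root_congr (h : IsDyadicSubring A α) {T S w : K} {n : ℕ} (r p u q : A)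
    (hs : T + S = 1 + α * r) (hp : T * S = α * p) (hw : w = 1 + α * u)
    (hq : w ^ 2 - (T + S) * w + T * S = α ^ n * q) :
    (∃ e : A, T = w + α ^ n * e) ∨ ∃ e : A, S = w + α ^ n * e := by
  have hTA : T ∈ A := by
    rcases h.mem_or_inv_mem T with hT | hT
    · exact hT
    · by_cases h0 : T = 0
      · rw [h0]; exact A.zero_mem
      · have : T = 1 + α * r - α * p * T⁻¹ := by
          field_simp
          linear_combination T * hs - hp
        rw [this]
        exact A.sub_mem (A.add_mem A.one_mem (A.mul_mem h.root_mem r.2))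
          (A.mul_mem (A.mul_mem h.root_mem p.2) hT)
  have key : ∀ {T S : K} (x : A), T + S = 1 + α * r →
      w ^ 2 - (T + S) * w + T * S = α ^ n * q → S = α * x →
      ∃ e : A, T = w + α ^ n * e := by
    intro T S x hs hq hx
    obtain ⟨s, hs'⟩ := h.exists_inv (u - x)
    push_cast at hs'
    refine ⟨-(q * s), ?_⟩
    have hws : (w - S) * s = 1 := by
      rw [hw, hx]
      linear_combination hs'
    push_cast
    linear_combination (T - w) * -hws - s * hq
  rcases h.residue T hTA with ⟨x, hx, hT⟩ | ⟨x, hx, hT⟩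
  · right
    exact key ⟨x, hx⟩ (by rw [← hs]; ring) (by linear_combination hq) hT
  · left
    refine key (r - ⟨x, hx⟩) hs hq ?_
    push_cast
    linear_combination hs - hT

theorem exists_eq_sq (h : IsDyadicSubring A α) {t w : K} (ht : IsUnitFiveMulSq α t) (n : ℕ)
    (u e : A) (hw : w = 1 + α * u) (hte : t * α ^ (2 * n) = w ^ 2 + α ^ 11 * e) :
    ∃ β, t = β ^ 2 := by
  obtain ⟨i, j, k, l, β, -, rfl⟩ := ht
  obtain ⟨s, hs⟩ := h.exists_inv u
  rw [← hw] at hs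
  obtain ⟨⟨i, rfl⟩, ⟨j, rfl⟩, ⟨k, rfl⟩, ⟨l, rfl⟩⟩ :=
    h.even_exponents (i := i) (j := j) (k := k) (l := l) (x := β * α ^ n * s)
      (r := (e * s ^ 2 : A)) (e * s ^ 2 : A).2 (by
        rw [pow_mul'] at hte
        push_cast
        linear_combination s ^ 2 * hte + (w * s + 1) * hs)
  exact ⟨(-1) ^ i * (α - 1) ^ j * (1 + α + α ^ 3) ^ k * 5 ^ l * β, by ring⟩

/-- A point with square first coordinate on `y ^ 2 = t * (t ^ 2 - 5 * γ * t + 5 * γ ^ 2)` lifts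
along the two-isogeny onto this curve, and the lift can be chosen in a given residue class. -/
theorem exists_isogenous {t y β γ N w : K} (h : IsDyadicSubring A α) (ht : t ≠ 0)
    (hy : y ^ 2 = t * (t ^ 2 - 5 * γ * t + 5 * γ ^ 2)) (hβ : t = β ^ 2) (r p u q : A)
    (hs : N * (4 * t - 10 * γ) = 1 + α * r) (hp : 5 * γ ^ 2 * N ^ 2 = α * p)
    (hw : w = 1 + α * u)
    (hq : w ^ 2 - N * (4 * t - 10 * γ) * w + 5 * γ ^ 2 * N ^ 2 = α ^ 11 * q) :
    ∃ t' y' : K, ∃ e : A, y' ^ 2 = t' * (t' ^ 2 + 10 * γ * t' + 5 * γ ^ 2) ∧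
      t' * N = w + α ^ 11 * e := by
  have hβ0 : β ≠ 0 := by rintro rfl; simp [hβ] at ht
  have hv : (y / β) ^ 2 = t ^ 2 - 5 * γ * t + 5 * γ ^ 2 := by
    rw [div_pow, ← hβ, hy]
    field_simp
  set v := y / β
  have main : ∀ v : K, v ^ 2 = t ^ 2 - 5 * γ * t + 5 * γ ^ 2 →
      (∃ e : A, N * (2 * t - 5 * γ + 2 * v) = w + α ^ 11 * e) →
      ∃ t' y' : K, ∃ e : A, y' ^ 2 = t' * (t' ^ 2 + 10 * γ * t' + 5 * γ ^ 2) ∧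
        t' * N = w + α ^ 11 * e := by
    rintro v hv ⟨e, he⟩
    refine ⟨2 * t - 5 * γ + 2 * v, 2 * (2 * t - 5 * γ + 2 * v) * β, e, ?_, by rw [← he]; ring⟩
    linear_combination (-4 * (2 * t - 5 * γ + 2 * v) ^ 2) * hβ -
      4 * (2 * t - 5 * γ + 2 * v) * hv
  rcases h.root_congr (T := N * (2 * t - 5 * γ + 2 * v)) (S := N * (2 * t - 5 * γ + 2 * -v))
    r p u q (by rw [← hs]; ring) (by rw [← hp]; linear_combination -4 * N ^ 2 * hv) hw
    (by rw [← hq]; linear_combination -4 * N ^ 2 * hv) with H | H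
  · exact main v hv H
  · exact main (-v) (by rw [neg_sq, hv]) H

/-- The analogue of `exists_isogenous` for the dual isogeny. -/
theorem exists_dual_isogenous {t y β γ N w : K} (h : IsDyadicSubring A α) (ht : t ≠ 0)
    (hy : y ^ 2 = t * (t ^ 2 + 10 * γ * t + 5 * γ ^ 2)) (hβ : t = β ^ 2) (r p u q : A)
    (hs : N * (5 * γ + t) = 1 + α * r) (hp : 5 * γ ^ 2 * N ^ 2 = α * p)
    (hw : w = 1 + α * u)
    (hq : w ^ 2 - N * (5 * γ + t) * w + 5 * γ ^ 2 * N ^ 2 = α ^ 11 * q) :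
    ∃ t' y' : K, ∃ e : A, y' ^ 2 = t' * (t' ^ 2 - 5 * γ * t' + 5 * γ ^ 2) ∧
      t' * N = w + α ^ 11 * e := by
  have h2 := h.two_ne_zero
  have hβ0 : β ≠ 0 := by rintro rfl; simp [hβ] at ht
  have hv : (y / β) ^ 2 = t ^ 2 + 10 * γ * t + 5 * γ ^ 2 := by
    rw [div_pow, ← hβ, hy]
    field_simp
  set v := y / β
  have main : ∀ v : K, v ^ 2 = t ^ 2 + 10 * γ * t + 5 * γ ^ 2 →
      (∃ e : A, N * ((5 * γ + t + v) / 2) = w + α ^ 11 * e) →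
      ∃ t' y' : K, ∃ e : A, y' ^ 2 = t' * (t' ^ 2 - 5 * γ * t' + 5 * γ ^ 2) ∧
        t' * N = w + α ^ 11 * e := by
    rintro v hv ⟨e, he⟩
    refine ⟨(5 * γ + t + v) / 2, β * ((5 * γ + t + v) / 2), e, ?_, by rw [← he]; ring⟩
    obtain ⟨s, hs⟩ : ∃ s, s = (5 * γ + t + v) / 2 := ⟨_, rfl⟩
    have hs2 : v = 2 * s - 5 * γ - t := by rw [hs]; field_simp; ring
    rw [← hs]
    rw [hs2] at hv
    have hv' : s ^ 2 - (5 * γ + t) * s + 5 * γ ^ 2 = 0 := by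
      have : (2 : K) * 2 * (s ^ 2 - (5 * γ + t) * s + 5 * γ ^ 2) = 0 := by
        linear_combination hv
      simpa [h2] using this
    linear_combination (-s ^ 2) * hβ - s * hv'
  rcases h.root_congr (T := N * ((5 * γ + t + v) / 2)) (S := N * ((5 * γ + t + -v) / 2))
    r p u q (by rw [← hs]; field_simp; ring)
    (by rw [← hp]; field_simp; linear_combination -N ^ 2 * hv) hw
    (by rw [← hq]; field_simp; linear_combination -N ^ 2 * hv) with H | H
  · exact main v hv H
  · exact main (-v) (by rw [neg_sq, hv]) H

end IsDyadicSubring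

@[simp, norm_cast]
theorem Subring.coe_ofNat {R : Type*} [Ring R] (A : Subring R) (n : ℕ) [n.AtLeastTwo] :
    ((ofNat(n) : A) : R) = ofNat(n) :=
  rfl

namespace IsDyadicSubring

variable {K : Type*} [Field K] {A : Subring K} {α : K}

theorem descent_base (h : IsDyadicSubring A α)
    (hC : ∀ (n : ℤ) (t y : K), t ≠ 0 →
      y ^ 2 = t * (t ^ 2 + n * (α - 1) * t + 5 * (α - 1) ^ 2) → IsUnitFiveMulSq α t)
    (φ : K →+* ℝ) (hφ : 0 < φ α) {t y : K} (e : A)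
    (hy : y ^ 2 = t * (t ^ 2 - 5 * (α - 1) * t + 5 * (α - 1) ^ 2))
    (hte : t * α ^ 12 = 1 + α ^ 11 * e) : False := by
  have hα := h.pow_five
  have ne_zero : ∀ {t w N : K} (u e : A), w = 1 + α * u → t * N = w + α ^ 11 * e → t ≠ 0 := by
    rintro t w N u e hw h1 rfl
    refine h.one_add_ne_zero (u + ⟨α, h.root_mem⟩ ^ 10 * e) ?_
    push_cast
    linear_combination -hw - h1
  have ht : t ≠ 0 := ne_zero 0 e (by simp) hte
  obtain ⟨β, hβ⟩ := h.exists_eq_sq (hC (-5) t y ht (by rw [hy]; push_cast; ring)) 6 0 e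
    (w := 1) (by simp) (by rw [hte]; ring)
  obtain ⟨a, ha⟩ : ∃ a : A, (a : K) = α := ⟨⟨α, h.root_mem⟩, rfl⟩
  obtain ⟨t₁, y₁, e₁, hy₁, ht₁⟩ := h.exists_isogenous (N := α ^ 2)
    (w := (1 + α ^ 2 + α ^ 3 + α ^ 4) ^ 2) ht hy hβ
    (a ^ 10 * e - 10 * (a - 1) * a) (5 * (a - 1) ^ 2 * a ^ 3)
    (2 * (a + a ^ 2 + a ^ 3) + a * (a + a ^ 2 + a ^ 3) ^ 2)
    (47 + 37 * a + 29 * a ^ 2 + 29 * a ^ 3 + 26 * a ^ 4 - e * (1 + a ^ 2 + a ^ 3 + a ^ 4) ^ 2)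
    (by
      push_cast
      rw [ha]
      linear_combination hte - t * α ^ 2 * (α ^ 5 + 2) * hα)
    (by push_cast; rw [ha]; ring) (by push_cast; rw [ha]; ring)
    (by
      push_cast
      rw [ha]
      linear_combination (4 * α ^ 2 - 6 * α ^ 3 + 4 * α ^ 4 - 7 * α ^ 6 - 14 * α ^ 7 - 13 * α ^ 8 -
        19 * α ^ 9 - 22 * α ^ 10 + α ^ 11) * hα - (1 + α ^ 2 + α ^ 3 + α ^ 4) ^ 2 *
        (hte - t * α ^ 2 * (α ^ 5 + 2) * hα))
  have hw : (1 + α ^ 2 + α ^ 3 + α ^ 4) = 1 + α * (a + a ^ 2 + a ^ 3 : A) := by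
    push_cast; rw [ha]; ring
  have ht₁0 : t₁ ≠ 0 := by
    refine ne_zero (2 * (a + a ^ 2 + a ^ 3) + a * (a + a ^ 2 + a ^ 3) ^ 2) e₁ ?_ ht₁
    push_cast; rw [ha]; ring
  obtain ⟨β₁, hβ₁⟩ := h.exists_eq_sq (hC 10 t₁ y₁ ht₁0 (by rw [hy₁]; push_cast; ring)) 1 _ e₁ hw
    ht₁
  obtain ⟨t₂, y₂, e₂, hy₂, ht₂⟩ := h.exists_dual_isogenous (N := α ^ 2)
    (w := -((α - 1) * (1 + α + α ^ 3)) * (1 + α ^ 2 + α ^ 4) ^ 2) ht₁0 hy₁ hβ₁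
    (5 * (a - 1) * a + 2 * (a + a ^ 2 + a ^ 3) + a * (a + a ^ 2 + a ^ 3) ^ 2 + a ^ 10 * e₁)
    (5 * (a - 1) ^ 2 * a ^ 3)
    (-2 + 3 * a - 7 * a ^ 2 + 4 * a ^ 3 - 4 * a ^ 4)
    (84 - 44 * a + 44 * a ^ 2 + 11 * a ^ 3 - 16 * a ^ 4 +
      e₁ * ((a - 1) * (1 + a + a ^ 3)) * (1 + a ^ 2 + a ^ 4) ^ 2)
    (by push_cast; rw [ha]; linear_combination ht₁)
    (by push_cast; rw [ha]; ring)
    (by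
      push_cast
      rw [ha]
      linear_combination
        (-α + α ^ 2 - 4 * α ^ 3 + 2 * α ^ 4 - 3 * α ^ 5 + α ^ 6 - α ^ 7) * hα)
    (by
      push_cast
      rw [ha]
      linear_combination (-2 * α ^ 2 + 3 * α ^ 3 - 3 * α ^ 4 + 6 * α ^ 5 + 5 * α ^ 6 - 4 * α ^ 7 +
        19 * α ^ 8 - 12 * α ^ 9 + 19 * α ^ 10 + 40 * α ^ 11 - 27 * α ^ 12 + 40 * α ^ 13 -
        23 * α ^ 14 + 22 * α ^ 15 - 10 * α ^ 16 + 7 * α ^ 17 - 2 * α ^ 18 + α ^ 19) * hα +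
        ((α - 1) * (1 + α + α ^ 3)) * (1 + α ^ 2 + α ^ 4) ^ 2 * ht₁)
  have ht₂0 : t₂ ≠ 0 := by
    refine ne_zero (-2 + 3 * a - 7 * a ^ 2 + 4 * a ^ 3 - 4 * a ^ 4) e₂ ?_ ht₂
    push_cast
    rw [ha]
    linear_combination
      (-α + α ^ 2 - 4 * α ^ 3 + 2 * α ^ 4 - 3 * α ^ 5 + α ^ 6 - α ^ 7) * hα
  have hsq := (hC (-5) t₂ y₂ ht₂0 (by rw [hy₂]; push_cast; ring)).neg_mul
  have hw₂ : (α - 1) * (1 + α + α ^ 3) * (1 + α ^ 2 + α ^ 4) =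
      1 + α * (-a ^ 2 + a ^ 3 - 2 * a ^ 4 + 2 * a ^ 5 - a ^ 6 + a ^ 7 : A) := by
    push_cast; rw [ha]; linear_combination hα
  obtain ⟨β₂, hβ₂⟩ := h.exists_eq_sq hsq 1 _ (-((a - 1) * (1 + a + a ^ 3)) * e₂) hw₂ (by
    push_cast
    rw [ha]
    linear_combination -((α - 1) * (1 + α + α ^ 3)) * ht₂)
  have H := congrArg φ hβ₂
  have H' := congrArg φ hy₂
  have Hα := congrArg φ hα
  have hφ₂ : φ t₂ ≠ 0 := (map_ne_zero φ).2 ht₂0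
  simp only [map_mul, map_add, map_sub, map_neg, map_pow, map_one, map_ofNat] at H H' Hα
  have h1 : 1 < φ α := by
    by_contra! hle
    have := pow_le_one₀ hφ.le hle (n := 5)
    linarith
  set τ := φ t₂
  set x := φ α
  have hc : 0 < (x - 1) * (1 + x + x ^ 3) := mul_pos (by linarith) (by positivity)
  have hτ : τ < 0 := by
    refine lt_of_le_of_ne ?_ hφ₂
    by_contra! hpos
    nlinarith [sq_nonneg (φ β₂), mul_pos hc hpos]
  have : 0 < τ ^ 2 - 5 * (x - 1) * τ + 5 * (x - 1) ^ 2 := by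
    nlinarith [sq_nonneg (x - 1), mul_pos (neg_pos.2 hτ) (sub_pos.2 h1), sq_pos_of_neg hτ]
  nlinarith [sq_nonneg (φ y₂), mul_pos (neg_pos.2 hτ) this]

theorem descent (h : IsDyadicSubring A α)
    (hC : ∀ (n : ℤ) (t y : K), t ≠ 0 →
      y ^ 2 = t * (t ^ 2 + n * (α - 1) * t + 5 * (α - 1) ^ 2) → IsUnitFiveMulSq α t)
    (φ : K →+* ℝ) (hφ : 0 < φ α) (m : ℕ) {t y : K} (e : A)
    (hy : y ^ 2 = t * (t ^ 2 - 5 * (α - 1) * t + 5 * (α - 1) ^ 2))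
    (hte : t * α ^ (2 * (5 * m + 6)) = 1 + α ^ 11 * e) : False := by
  induction m generalizing t y e with
  | zero => exact h.descent_base hC φ hφ e hy hte
  | succ m ih =>
    have hα := h.pow_five
    obtain ⟨a, ha⟩ : ∃ a : A, (a : K) = α := ⟨⟨α, h.root_mem⟩, rfl⟩
    have ne_zero : ∀ {t N : K} (e : A), t * N = 1 + α ^ 11 * e → t ≠ 0 := by
      rintro t N e h1 rfl
      refine h.one_add_ne_zero (a ^ 10 * e) ?_
      push_cast
      rw [ha]
      linear_combination -h1
    have ht : t ≠ 0 := ne_zero e hte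
    obtain ⟨β, hβ⟩ := h.exists_eq_sq (hC (-5) t y ht (by rw [hy]; push_cast; ring)) _ 0 e
      (w := 1) (by simp) (by rw [hte]; ring)
    obtain ⟨M, hM⟩ : ∃ M : A, (M : K) = α ^ (10 * m) := ⟨a ^ (10 * m), by push_cast; rw [ha]⟩
    have hN : α ^ (2 * (5 * m + 6)) = α ^ 12 * M := by rw [hM]; ring
    have hN' : α ^ (2 * (5 * (m + 1) + 6)) = α ^ 22 * M := by rw [hM]; ring
    rw [hN'] at hte
    obtain ⟨t₁, y₁, e₁, hy₁, ht₁⟩ := h.exists_isogenous (N := α ^ 12 * M) (w := 1) ht hy hβ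
      (a ^ 10 * e - 10 * (a - 1) * a ^ 11 * M) (5 * (a - 1) ^ 2 * a ^ 23 * M ^ 2) 0
      (-e + 10 * (a - 1) * a * M + 5 * (a - 1) ^ 2 * a ^ 13 * M ^ 2)
      (by
        push_cast
        rw [ha]
        linear_combination hte - M * t * α ^ 12 * (α ^ 5 + 2) * hα)
      (by push_cast; rw [ha]; ring) (by simp)
      (by
        push_cast
        rw [ha]
        linear_combination -hte + M * t * α ^ 12 * (α ^ 5 + 2) * hα)
    have ht₁0 := ne_zero e₁ ht₁
    rw [← hN] at ht₁
    obtain ⟨β₁, hβ₁⟩ := h.exists_eq_sq (hC 10 t₁ y₁ ht₁0 (by rw [hy₁]; push_cast; ring)) _ 0 e₁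
      (w := 1) (by simp) (by rw [ht₁]; ring)
    rw [hN] at ht₁
    obtain ⟨t₂, y₂, e₂, hy₂, ht₂⟩ := h.exists_dual_isogenous (N := α ^ 12 * M) (w := 1)
      ht₁0 hy₁ hβ₁ (a ^ 10 * e₁ + 5 * (a - 1) * a ^ 11 * M) (5 * (a - 1) ^ 2 * a ^ 23 * M ^ 2) 0
      (-e₁ - 5 * (a - 1) * a * M + 5 * (a - 1) ^ 2 * a ^ 13 * M ^ 2)
      (by
        push_cast
        rw [ha]
        linear_combination ht₁)
      (by push_cast; rw [ha]; ring) (by simp)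
      (by
        push_cast
        rw [ha]
        linear_combination -ht₁)
    rw [← hN] at ht₂
    exact ih e₂ hy₂ ht₂

end IsDyadicSubring

namespace IsDyadicSubring

/-- The quotient of `γ * Y ^ 2 = x ^ 4 + x ^ 3 + x ^ 2 + x + 1` by an involution, as a map to
`y ^ 2 = t * (t ^ 2 - 5 * γ * t + 5 * γ ^ 2)` sending the point `(x₀, Y₀)` to infinity. -/
theorem quotient_map {K : Type*} [Field K] {γ x Y x₀ Y₀ t ξ : K} (h2 : (2 : K) ≠ 0)
    (hξ : ξ = x - x₀) (hξ0 : ξ ≠ 0) (hW : x * x₀ - 1 ≠ 0)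
    (hY : γ * Y ^ 2 = x ^ 4 + x ^ 3 + x ^ 2 + x + 1)
    (hY₀ : γ * Y₀ ^ 2 = x₀ ^ 4 + x₀ ^ 3 + x₀ ^ 2 + x₀ + 1)
    (ht : t = γ * ((2 * x₀ ^ 2 + x₀ + 2) * (2 * x ^ 2 + x + 2) - 5 * x₀ * x + 4 * γ * Y₀ * Y) /
      (2 * ξ ^ 2)) :
    (t * γ * ((x₀ ^ 2 - 1) * Y + Y₀ * (x ^ 2 - 1)) / (ξ * (x * x₀ - 1))) ^ 2 =
      t * (t ^ 2 - 5 * γ * t + 5 * γ ^ 2) := by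
  obtain ⟨L, hL⟩ : ∃ L, L = (2 * x₀ ^ 2 + x₀ + 2) * (2 * x ^ 2 + x + 2) - 5 * x₀ * x +
    4 * γ * Y₀ * Y := ⟨_, rfl⟩
  have key : 2 * γ * L * ((x₀ ^ 2 - 1) * Y + Y₀ * (x ^ 2 - 1)) ^ 2 =
      (x * x₀ - 1) ^ 2 * (L ^ 2 - 10 * L * ξ ^ 2 + 20 * ξ ^ 4) := by
    rw [hL, hξ]
    linear_combination
      2 * ((2 * x₀ ^ 2 + x₀ + 2) * (2 * x ^ 2 + x + 2) - 5 * x₀ * x + 4 * γ * Y₀ * Y) *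
        ((x₀ ^ 2 - 1) ^ 2 * hY + (x ^ 2 - 1) ^ 2 * hY₀) +
      16 * ((x₀ ^ 2 - 1) * (x ^ 2 - 1) - (x * x₀ - 1) ^ 2) *
        (γ * Y₀ ^ 2 * hY + (x ^ 4 + x ^ 3 + x ^ 2 + x + 1) * hY₀)
  obtain ⟨Q, hQ⟩ : ∃ Q, Q = (x₀ ^ 2 - 1) * Y + Y₀ * (x ^ 2 - 1) := ⟨_, rfl⟩
  rw [← hL, eq_div_iff (by positivity)] at ht
  rw [← hQ] at key ⊢
  rw [div_pow, div_eq_iff (by positivity)]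
  refine mul_left_cancel₀ (pow_ne_zero 2 (mul_ne_zero h2 hξ0)) ?_
  linear_combination t * γ ^ 2 * key + (2 * t * γ ^ 2 * Q ^ 2 -
    t * (x * x₀ - 1) ^ 2 * (2 * ξ ^ 2 * t + γ * L - 10 * γ * ξ ^ 2)) * ht

variable {K : Type*} [Field K] {A : Subring K} {α : K}

theorem no_points_congr (h : IsDyadicSubring A α)
    (hC : ∀ (n : ℤ) (t y : K), t ≠ 0 →
      y ^ 2 = t * (t ^ 2 + n * (α - 1) * t + 5 * (α - 1) ^ 2) → IsUnitFiveMulSq α t)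
    (φ : K →+* ℝ) (hφ : 0 < φ α) {X Y Y₀ : K} (m : ℕ) (X₀ r k e δ : A)
    (hY : α ^ 4 * X ^ 4 + α ^ 3 * X ^ 3 + α ^ 2 * X ^ 2 + α * X + 1 = (α - 1) * Y ^ 2)
    (hY₀ : α ^ 4 * (X₀ : K) ^ 4 + α ^ 3 * (X₀ : K) ^ 3 + α ^ 2 * (X₀ : K) ^ 2 + α * X₀ + 1 =
      (α - 1) * Y₀ ^ 2)
    (hX : X = X₀ + 8 * 2 ^ m * r) (hr : (r : K) ^ 2 = 1 + α ^ 11 * k)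
    (he : ((α - 1) * Y₀) ^ 2 = 1 + α ^ 11 * e) (hδ : Y = Y₀ + α ^ 11 * δ) : False := by
  have hα := h.pow_five
  have hα0 := h.ne_zero
  obtain ⟨a, ha⟩ : ∃ a : A, (a : K) = α := ⟨⟨α, h.root_mem⟩, rfl⟩
  have hα15 : α ^ 15 = 8 := by rw [pow_mul α 5 3, hα]; norm_num
  obtain ⟨s, hs⟩ := h.exists_inv (a ^ 10 * k)
  have hrs : (r : K) ^ 2 * s = 1 := by
    push_cast at hs
    rw [ha] at hs
    linear_combination s * hr + hs
  have hr0 : (r : K) ≠ 0 := by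
    intro h0
    simp [h0] at hrs
  obtain ⟨η, hη⟩ : ∃ η : A, (η : K) = α ^ (5 * m) * r := ⟨a ^ (5 * m) * r, by push_cast; rw [ha]⟩
  have hη0 : (η : K) ≠ 0 := by rw [hη]; exact mul_ne_zero (pow_ne_zero _ hα0) hr0
  have hX' : X = X₀ + α ^ 15 * η := by rw [hX, hη, hα15, pow_mul, hα]; ring
  set γ := α - 1 with hγ
  set x := α * X with hx
  set x₀ : K := α * X₀ with hx₀
  set ξ := α ^ 16 * (η : K) with hξ
  have hξ' : ξ = x - x₀ := by rw [hx, hx₀, hX', hξ]; ring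
  have hW : x * x₀ - 1 ≠ 0 := by
    intro h0
    refine h.mul_ne_one ((X₀ + a ^ 15 * η) * (a * X₀) : A).2 ?_
    push_cast
    rw [ha, ← hX']
    rw [hx, hx₀] at h0
    linear_combination h0
  obtain ⟨t, ht⟩ : ∃ t, t = γ * ((2 * x₀ ^ 2 + x₀ + 2) * (2 * x ^ 2 + x + 2) - 5 * x₀ * x +
    4 * γ * Y₀ * Y) / (2 * ξ ^ 2) := ⟨_, rfl⟩
  have hF : γ * Y ^ 2 = x ^ 4 + x ^ 3 + x ^ 2 + x + 1 := by rw [hx, ← hY]; ring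
  have hF₀ : γ * Y₀ ^ 2 = x₀ ^ 4 + x₀ ^ 3 + x₀ ^ 2 + x₀ + 1 := by rw [hx₀, ← hY₀]; ring
  have hξ0 : ξ ≠ 0 := mul_ne_zero (pow_ne_zero _ hα0) hη0
  have h2 := h.two_ne_zero
  have hcurve := quotient_map h2 hξ' hξ0 hW hF hF₀ ht
  obtain ⟨E, hE⟩ : ∃ E : A, (E : K) = e + γ * (η * (4 * x₀ ^ 3 + 3 * x₀ ^ 2 + 2 * x₀ + 1) +
      α ^ 11 * η ^ 2 * (2 * x₀ ^ 2 + x₀ + 2 +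
        (6 * x₀ ^ 2 + 3 * x₀ + 1 + ξ * (4 * x₀ + 1) + ξ ^ 2)) - α * γ * δ ^ 2) := by
    refine ⟨e + (a - 1) * (η * (4 * (a * X₀) ^ 3 + 3 * (a * X₀) ^ 2 + 2 * (a * X₀) + 1) +
      a ^ 11 * η ^ 2 * (2 * (a * X₀) ^ 2 + a * X₀ + 2 + (6 * (a * X₀) ^ 2 + 3 * (a * X₀) + 1 +
        a ^ 16 * η * (4 * (a * X₀) + 1) + (a ^ 16 * η) ^ 2)) - a * (a - 1) * δ ^ 2), ?_⟩
    push_cast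
    rw [ha]
  have hL : γ * ((2 * x₀ ^ 2 + x₀ + 2) * (2 * x ^ 2 + x + 2) - 5 * x₀ * x + 4 * γ * Y₀ * Y) =
      α ^ 15 * (1 + α ^ 11 * E) := by
    have hxx : x = x₀ + ξ := by rw [hξ']; ring
    have h4 : (4 : K) = α ^ 10 := by rw [pow_mul α 5 2, hα]; norm_num
    have h4ξ : 4 * ξ = α ^ 26 * η := by rw [h4, hξ]; ring
    have h2ξ : 2 * ξ ^ 2 = α ^ 37 * η ^ 2 := by rw [← hα, hξ]; ring
    have h2δ : 2 * (α ^ 11 * (δ : K)) ^ 2 = α ^ 27 * δ ^ 2 := by rw [← hα]; ring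
    have hL' : (2 * x₀ ^ 2 + x₀ + 2) * (2 * x ^ 2 + x + 2) - 5 * x₀ * x + 4 * γ * Y₀ * Y =
        8 * γ * Y₀ ^ 2 + 4 * ξ * (4 * x₀ ^ 3 + 3 * x₀ ^ 2 + 2 * x₀ + 1) + 2 * ξ ^ 2 *
          (2 * x₀ ^ 2 + x₀ + 2 + (6 * x₀ ^ 2 + 3 * x₀ + 1 + ξ * (4 * x₀ + 1) + ξ ^ 2)) -
        2 * γ * (α ^ 11 * δ) ^ 2 := by
      rw [hxx, hδ] at hF ⊢
      linear_combination 2 * hF - 6 * hF₀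
    rw [hL']
    linear_combination 8 * he + γ * (4 * x₀ ^ 3 + 3 * x₀ ^ 2 + 2 * x₀ + 1) * h4ξ +
      γ * (2 * x₀ ^ 2 + x₀ + 2 + (6 * x₀ ^ 2 + 3 * x₀ + 1 + ξ * (4 * x₀ + 1) + ξ ^ 2)) * h2ξ -
      γ ^ 2 * h2δ - (1 + α ^ 11 * e) * hα15 - α ^ 26 * hE
  refine h.descent hC φ hφ (m + 1) ((E - k) * s) hcurve ?_
  have hM : α ^ (2 * (5 * (m + 1) + 6)) * r ^ 2 * α ^ 15 = 2 * ξ ^ 2 := by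
    rw [hξ, hη, ← hα]; ring
  rw [eq_div_iff (by positivity), hL, ← hM] at ht
  push_cast
  have : t * (α ^ (2 * (5 * (m + 1) + 6)) * r ^ 2) = 1 + α ^ 11 * E := by
    refine mul_right_cancel₀ (pow_ne_zero 15 hα0) ?_
    linear_combination ht
  linear_combination s * this - (t * α ^ (2 * (5 * (m + 1) + 6)) - 1) * hrs - s * hr

end IsDyadicSubring

theorem Quintic.eval_sub {K : Type*} [Field K] (α : K) (x y : Quintic) :
    Quintic.eval α ⟨x.c₀ - y.c₀, x.c₁ - y.c₁, x.c₂ - y.c₂, x.c₃ - y.c₃, x.c₄ - y.c₄⟩ =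
      x.eval α - y.eval α := by
  simp only [eval]
  push_cast
  ring

set_option maxRecDepth 100000 in
theorem eq_or_three_mul_add_eq_zero_of_sq_digits : ∀ (a b : ZMod 8) (e₁ e₂ e₃ e₄ : Fin 2),
    4 * b ≠ 0 →
    let d := (Quintic.ofDigits e₁ e₂ e₃ e₄).mul (Quintic.ofDigits e₁ e₂ e₃ e₄)
    2 * a ^ 4 - b ^ 4 - d.c₀ = 0 → 2 * (b ^ 4 - a * b ^ 3 - d.c₁) = 0 →
    2 * (a * b ^ 3 - a ^ 2 * b ^ 2 - d.c₂) = 0 → 2 * (a ^ 2 * b ^ 2 - a ^ 3 * b - d.c₃) = 0 →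
    2 * (a ^ 3 * b - a ^ 4 - d.c₄) = 0 → a - b = 0 ∨ 3 * a + b = 0 := by
  decide +kernel

namespace IsDyadicSubring

variable {K : Type*} [Field K] {A : Subring K} {α : K}

theorem exists_inv_sub_one (h : IsDyadicSubring A α) : ∃ g : A, (α - 1) * (g : K) = 1 := by
  obtain ⟨g, hg⟩ := h.exists_inv (1 - ⟨α, h.root_mem⟩ ^ 4)
  push_cast at hg
  exact ⟨g, by linear_combination hg + g * h.pow_five⟩

theorem congr_or_congr_neg (h : IsDyadicSubring A α) {X Y Y₀ : K} (X₀ η u : A)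
    (hY : α ^ 4 * X ^ 4 + α ^ 3 * X ^ 3 + α ^ 2 * X ^ 2 + α * X + 1 = (α - 1) * Y ^ 2)
    (hY₀ : α ^ 4 * (X₀ : K) ^ 4 + α ^ 3 * (X₀ : K) ^ 3 + α ^ 2 * (X₀ : K) ^ 2 + α * X₀ + 1 =
      (α - 1) * Y₀ ^ 2)
    (hX : X = X₀ + α ^ 15 * η) (hu : Y₀ = 1 + α * u) :
    (∃ δ : A, Y = Y₀ + α ^ 11 * δ) ∨ ∃ δ : A, -Y = Y₀ + α ^ 11 * δ := by
  have hα := h.pow_five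
  have hα0 := h.ne_zero
  obtain ⟨a, ha⟩ : ∃ a : A, (a : K) = α := ⟨⟨α, h.root_mem⟩, rfl⟩
  obtain ⟨g, hg⟩ := h.exists_inv_sub_one
  obtain ⟨x, hx⟩ : ∃ x : A, (x : K) = α * X :=
    ⟨a * (X₀ + a ^ 15 * η), by rw [hX]; push_cast; rw [ha]⟩
  obtain ⟨x₀, hx₀⟩ : ∃ x₀ : A, (x₀ : K) = α * X₀ := ⟨a * X₀, by push_cast; rw [ha]⟩
  have hxx : (x : K) - x₀ = α ^ 16 * η := by rw [hx, hx₀, hX]; ring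
  obtain ⟨P, hP⟩ : ∃ P : A, P = x ^ 3 + x ^ 2 * x₀ + x * x₀ ^ 2 + x₀ ^ 3 + x ^ 2 + x * x₀ +
    x₀ ^ 2 + x + x₀ + 1 := ⟨_, rfl⟩
  have hP' := congrArg (Subtype.val : A → K) hP
  push_cast at hP'
  have hYY : Y ^ 2 - Y₀ ^ 2 = α ^ 16 * (η * P * g) := by
    have : (α - 1) * (Y ^ 2 - Y₀ ^ 2) = α ^ 16 * η * P := by
      rw [← hxx, hP', mul_sub, ← hY, ← hY₀, hx, hx₀]
      ring
    linear_combination g * this - (Y ^ 2 - Y₀ ^ 2) * hg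
  have hprod : (Y₀ - Y) / α ^ 5 * ((Y + Y₀) / α ^ 5) = -(α ^ 6 * (η * P * g)) := by
    field_simp
    linear_combination -hYY
  have hsum : (Y₀ - Y) / α ^ 5 + (Y + Y₀) / α ^ 5 = Y₀ := by
    field_simp
    linear_combination -Y₀ * hα
  rcases h.root_congr (n := 6) u (-(a ^ 5 * (η * P * g))) u (-(η * P * g)) (hsum.trans hu)
    (by rw [hprod]; push_cast; rw [ha]; ring) hu (by rw [hsum, hprod]; push_cast; ring)
    with ⟨e, he⟩ | ⟨e, he⟩
  · right
    refine ⟨e, ?_⟩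
    field_simp at he
    linear_combination he + Y₀ * hα
  · left
    refine ⟨e, ?_⟩
    field_simp at he
    linear_combination he + Y₀ * hα

theorem no_points_near (h : IsDyadicSubring A α)
    (hC : ∀ (n : ℤ) (t y : K), t ≠ 0 →
      y ^ 2 = t * (t ^ 2 + n * (α - 1) * t + 5 * (α - 1) ^ 2) → IsUnitFiveMulSq α t)
    (φ : K →+* ℝ) (hφ : 0 < φ α) {X Y Y₀ : K} (m : ℕ) (X₀ r k e u : A)
    (hY : α ^ 4 * X ^ 4 + α ^ 3 * X ^ 3 + α ^ 2 * X ^ 2 + α * X + 1 = (α - 1) * Y ^ 2)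
    (hY₀ : α ^ 4 * (X₀ : K) ^ 4 + α ^ 3 * (X₀ : K) ^ 3 + α ^ 2 * (X₀ : K) ^ 2 + α * X₀ + 1 =
      (α - 1) * Y₀ ^ 2)
    (hX : X = X₀ + 8 * 2 ^ m * r) (hr : (r : K) ^ 2 = 1 + α ^ 11 * k)
    (hu : Y₀ = 1 + α * u) (he : ((α - 1) * Y₀) ^ 2 = 1 + α ^ 11 * e) : False := by
  have hX' : X = X₀ + α ^ 15 * (2 ^ m * r : A) := by
    rw [hX, pow_mul α 5 3, h.pow_five]
    push_cast
    ring
  rcases h.congr_or_congr_neg X₀ _ u hY hY₀ hX' hu with ⟨δ, hδ⟩ | ⟨δ, hδ⟩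
  · exact h.no_points_congr hC φ hφ m X₀ r k e δ hY hY₀ hX hr he hδ
  · exact h.no_points_congr hC φ hφ m X₀ r k e δ (by rw [hY, neg_sq]) hY₀ hX hr he hδ

theorem odd_and_dvd_of_sq (h : IsDyadicSubring A α) {a b : ℤ} (hab : ¬(2 ∣ a ∧ 2 ∣ b)) {Z : K}
    (hZ : (α - 1) * (α ^ 4 * (a : K) ^ 4 + α ^ 3 * (a : K) ^ 3 * b + α ^ 2 * (a : K) ^ 2 * b ^ 2 +
      α * a * b ^ 3 + b ^ 4) = Z ^ 2) : ¬2 ∣ b ∧ (8 ∣ a - b ∨ 8 ∣ 3 * a + b) := by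
  have hα := h.pow_five
  have hα0 := h.ne_zero
  obtain ⟨ω, hω⟩ : ∃ ω : A, (ω : K) = α := ⟨⟨α, h.root_mem⟩, rfl⟩
  by_cases hb : 2 ∣ b
  · exfalso
    have ha : ¬2 ∣ a := fun ha => hab ⟨ha, hb⟩
    obtain ⟨c, rfl⟩ := hb
    obtain ⟨n, hn⟩ : ∃ n : ℤ, a ^ 4 = 1 + 2 * n := by
      obtain ⟨j, hj⟩ : Odd (a ^ 4) := (Int.not_even_iff_odd.1 (by rwa [even_iff_two_dvd])).pow
      exact ⟨j, by rw [hj]; ring⟩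
    have hn' : (a : K) ^ 4 = 1 + 2 * n := by
      have := congrArg (Int.cast : ℤ → K) hn
      push_cast at this
      exact this
    obtain ⟨R, hR⟩ : ∃ R : A, (R : K) = a ^ 3 * c + α ^ 4 * a ^ 2 * c ^ 2 + α ^ 8 * a * c ^ 3 +
        α ^ 12 * c ^ 4 := by
      refine ⟨a ^ 3 * c + ω ^ 4 * a ^ 2 * c ^ 2 + ω ^ 8 * a * c ^ 3 + ω ^ 12 * c ^ 4, ?_⟩
      push_cast
      rw [hω]
    obtain ⟨B, hB⟩ : ∃ B : A, (B : K) = -α ^ 3 + (α - 1) * (α ^ 3 * n + α ^ 2 * R) := by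
      refine ⟨-ω ^ 3 + (ω - 1) * (ω ^ 3 * n + ω ^ 2 * R), ?_⟩
      push_cast
      rw [hω]
    have hz : (Z / α ^ 2) ^ 2 = 1 + α * (1 + α * B) := by
      rw [div_pow, ← hZ, div_eq_iff (by positivity), hB, hR]
      push_cast
      rw [← hα] at hn' ⊢
      linear_combination α ^ 4 * (α - 1) * hn' + α ^ 4 * hα
    have hzA : Z / α ^ 2 ∈ A := by
      apply h.mem_of_sq_mem
      rw [hz, ← hω]
      exact Subtype.mem (1 + ω * (1 + ω * B))
    rcases h.residue _ hzA with ⟨r, hr, hzr⟩ | ⟨r, hr, hzr⟩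
    · rw [hzr] at hz
      lift r to A using hr
      refine h.mul_ne_one (ω * r ^ 2 - 1 - ω * B).2 ?_
      push_cast
      rw [hω]
      linear_combination hz
    · rw [hzr] at hz
      lift r to A using hr
      refine h.mul_ne_one (ω ^ 4 * r + r ^ 2 - B).2 (mul_left_cancel₀ hα0 ?_)
      push_cast
      rw [hω]
      linear_combination hz + α * r * hα
  · refine ⟨hb, ?_⟩
    have hb' : (4 : ZMod 8) * b ≠ 0 := by
      intro h0
      have : ((4 * b : ℤ) : ZMod 8) = 0 := by exact_mod_cast h0
      rw [ZMod.intCast_zmod_eq_zero_iff_dvd] at this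
      omega
    obtain ⟨k, hk⟩ : ∃ k, b ^ 4 = 1 + 2 * k := by
      obtain ⟨j, hj⟩ : Odd (b ^ 4) := (Int.not_even_iff_odd.1 (by rwa [even_iff_two_dvd])).pow
      exact ⟨j, by rw [hj]; ring⟩
    have hk' : (b : K) ^ 4 = 1 + 2 * k := by
      have := congrArg (Int.cast : ℤ → K) hk
      push_cast at this
      exact this
    let x : Quintic := (⟨b ^ 4, a * b ^ 3, a ^ 2 * b ^ 2, a ^ 3 * b, a ^ 4⟩ : Quintic).mul
      ⟨-1, 1, 0, 0, 0⟩
    have hx : x.eval α = Z ^ 2 := by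
      rw [Quintic.eval_mul hα, ← hZ]
      simp only [Quintic.eval]
      push_cast
      ring
    obtain ⟨ρ, hρ, hxρ⟩ := h.eval_eq_one_add (x := x)
      (by simp only [x, Quintic.mul]; omega)
    have hZA : Z ∈ A := h.mem_of_sq_mem (by rw [← hx]; exact h.eval_mem x)
    rw [hx] at hxρ
    rcases h.residue Z hZA with ⟨s, hs, hZs⟩ | ⟨s, hs, hZs⟩
    · refine absurd ?_ (h.mul_ne_one (r := α * s ^ 2 - ρ) (A.sub_mem (A.mul_mem h.root_mem
        (A.pow_mem hs 2)) hρ))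
      rw [hZs] at hxρ
      linear_combination hxρ
    · obtain ⟨e₁, e₂, e₃, e₄, t, ht, hZt⟩ := h.exists_sq_digits hs hZs
      have hdvd := h.coord_dvd ht (x := ⟨_, _, _, _, _⟩) (by
        rw [Quintic.eval_sub α x ((Quintic.ofDigits e₁ e₂ e₃ e₄).mul
          (Quintic.ofDigits e₁ e₂ e₃ e₄)), hx, Quintic.eval_mul hα]
        linear_combination hZt)
      obtain ⟨d₀, d₁, d₂, d₃, d₄⟩ := hdvd
      have hfin := eq_or_three_mul_add_eq_zero_of_sq_digits a b e₁ e₂ e₃ e₄ hb'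
      have h4 : ∀ n : ℤ, 4 ∣ n → ((2 * n : ℤ) : ZMod 8) = 0 := fun n hn =>
        (ZMod.intCast_zmod_eq_zero_iff_dvd _ 8).2 (by omega)
      have h8 : ∀ n : ℤ, ((n : ℤ) : ZMod 8) = 0 → 8 ∣ n := fun n hn =>
        (ZMod.intCast_zmod_eq_zero_iff_dvd _ 8).1 hn
      have d₀' := (ZMod.intCast_zmod_eq_zero_iff_dvd _ 8).2 d₀
      have d₁' := h4 _ d₁
      have d₂' := h4 _ d₂
      have d₃' := h4 _ d₃
      have d₄' := h4 _ d₄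
      generalize (Quintic.ofDigits e₁ e₂ e₃ e₄).mul (Quintic.ofDigits e₁ e₂ e₃ e₄) = d
        at hfin d₀' d₁' d₂' d₃' d₄'
      simp only [x, Quintic.mul] at d₀' d₁' d₂' d₃' d₄'
      push_cast at d₀' d₁' d₂' d₃' d₄'
      refine (hfin (by linear_combination d₀') (by linear_combination d₁')
        (by linear_combination d₂') (by linear_combination d₃')
        (by linear_combination d₄')).imp (fun H => h8 _ ?_) fun H => h8 _ ?_
      · push_cast
        exact H
      · push_cast
        exact H

end IsDyadicSubring

namespace IsDyadicSubring

variable {K : Type*} [Field K] {A : Subring K} {α : K}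

theorem exists_inv_intCast (h : IsDyadicSubring A α) {d : ℤ} (hd : ¬2 ∣ d) :
    ∃ s : A, (d : K) * (s : K) = 1 := by
  obtain ⟨j, hj⟩ : Odd d := Int.not_even_iff_odd.1 (by rwa [even_iff_two_dvd])
  obtain ⟨s, hs⟩ := h.exists_inv (⟨α, h.root_mem⟩ ^ 4 * j)
  refine ⟨s, ?_⟩
  rw [← hs, hj]
  push_cast
  linear_combination -j * s * h.pow_five

theorem exists_div_eq (h : IsDyadicSubring A α) {n d : ℤ} (hn : n ≠ 0) (hn8 : 8 ∣ n)
    (hd : ¬2 ∣ d) :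
    ∃ (m : ℕ) (r k : A), (n : K) / d = 8 * 2 ^ m * r ∧ (r : K) ^ 2 = 1 + α ^ 11 * k := by
  obtain ⟨c, rfl⟩ := hn8
  have hc0 : c ≠ 0 := right_ne_zero_of_mul hn
  obtain ⟨m, c', hc', rfl⟩ : ∃ (m : ℕ) (c' : ℤ), ¬2 ∣ c' ∧ c = 2 ^ m * c' := by
    have hfin : FiniteMultiplicity 2 c := Int.finiteMultiplicity_iff.2 ⟨by decide, hc0⟩
    obtain ⟨c', hc, hc'⟩ := hfin.exists_eq_pow_mul_and_not_dvd
    exact ⟨_, c', hc', hc⟩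
  obtain ⟨s, hs⟩ := h.exists_inv_intCast hd
  obtain ⟨j, hj⟩ : (8 : ℤ) ∣ c' ^ 2 - d ^ 2 := by
    have h1 := Int.eight_dvd_sq_sub_one_of_odd (Int.not_even_iff_odd.1 (by rwa [even_iff_two_dvd]) :
      Odd c')
    have h2 := Int.eight_dvd_sq_sub_one_of_odd (Int.not_even_iff_odd.1 (by rwa [even_iff_two_dvd]) :
      Odd d)
    omega
  have hjK : (c' : K) ^ 2 - d ^ 2 = 8 * j := mod_cast congrArg (Int.cast : ℤ → K) hj
  refine ⟨m, c' * s, ⟨α, h.root_mem⟩ ^ 4 * j * s ^ 2, ?_, ?_⟩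
  · rw [div_eq_iff (left_ne_zero_of_mul_eq_one hs)]
    push_cast
    linear_combination -8 * 2 ^ m * c' * hs
  · push_cast
    linear_combination (s : K) ^ 2 * hjK + (d * s + 1) * hs -
      j * s ^ 2 * (α ^ 10 + 2 * α ^ 5 + 4) * h.pow_five

/-- The rational abscissae of points on the curve are `1` and `-1/3`. -/
theorem abscissa_eq [CharZero K] (h : IsDyadicSubring A α)
    (hC : ∀ (n : ℤ) (t y : K), t ≠ 0 →
      y ^ 2 = t * (t ^ 2 + n * (α - 1) * t + 5 * (α - 1) ^ 2) → IsUnitFiveMulSq α t)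
    (φ : K →+* ℝ) (hφ : 0 < φ α) {X : ℚ} {Y : K}
    (hY : α ^ 4 * (X : K) ^ 4 + α ^ 3 * (X : K) ^ 3 + α ^ 2 * (X : K) ^ 2 + α * X + 1 =
      (α - 1) * Y ^ 2) : X = 1 ∨ X = -(1 / 3) := by
  have hα := h.pow_five
  obtain ⟨ω, hω⟩ : ∃ ω : A, (ω : K) = α := ⟨⟨α, h.root_mem⟩, rfl⟩
  have hden : (X.den : K) ≠ 0 := mod_cast X.den_ne_zero
  have hXK : (X : K) = X.num / (X.den : ℤ) := by rw [Int.cast_natCast, ← Rat.cast_def]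
  have hab : ¬(2 ∣ X.num ∧ 2 ∣ (X.den : ℤ)) := by
    rintro ⟨h1, h2⟩
    exact absurd (Nat.dvd_gcd (Int.natAbs_dvd_natAbs.2 h1) (Int.natCast_dvd_natCast.1 h2))
      (by rw [X.reduced]; decide)
  obtain ⟨hb, h8⟩ := h.odd_and_dvd_of_sq hab (Z := (α - 1) * (X.den : ℤ) ^ 2 * Y) <| by
    have hden' : ((X.den : ℤ) : K) ≠ 0 := mod_cast hden
    rw [hXK] at hY
    field_simp at hY
    linear_combination (α - 1) * hY
  have hXq : X = X.num / (X.den : ℤ) := by rw [Int.cast_natCast, X.num_div_den]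
  have hdenq : ((X.den : ℤ) : ℚ) ≠ 0 := mod_cast X.den_ne_zero
  have hdenK : ((X.den : ℤ) : K) ≠ 0 := mod_cast hden
  generalize (X.den : ℤ) = d at *
  rcases h8 with h8 | h8
  · left
    by_contra hX
    have hn : X.num - d ≠ 0 := by
      intro h0
      apply hX
      rw [hXq, sub_eq_zero.1 h0, div_self hdenq]
    obtain ⟨m, r, k, hr, hk⟩ := h.exists_div_eq hn h8 hb
    refine h.no_points_near hC φ hφ (Y₀ := 1 + α * (1 + ω + ω ^ 2 + ω ^ 3 : A)) m 1 r k 0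
      (1 + ω + ω ^ 2 + ω ^ 3) hY ?_ ?_ hk rfl ?_
    · push_cast
      rw [hω]
      linear_combination (-(α ^ 4 + α ^ 3 + α ^ 2 + α + 1)) * hα
    · rw [← hr, hXK]
      push_cast
      field_simp
      ring
    · push_cast
      rw [hω]
      linear_combination α ^ 5 * hα
  · right
    by_contra hX
    have hn : 3 * X.num + d ≠ 0 := by
      intro h0
      apply hX
      have h0' : (3 : ℚ) * X.num + d = 0 := mod_cast h0
      rw [hXq, div_eq_iff hdenq]
      linear_combination h0' / 3
    have hb3 : ¬2 ∣ 3 * d := by omega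
    obtain ⟨m, r, k, hr, hk⟩ := h.exists_div_eq hn h8 hb3
    obtain ⟨s, hs⟩ := h.exists_inv_intCast (d := 3) (by decide)
    have hs3 : (s : K) = 1 / 3 := by
      rw [eq_div_iff (by norm_num)]
      linear_combination hs
    refine h.no_points_near hC φ hφ
      (Y₀ := 1 + α * (s ^ 2 * (3 - ω + 5 * ω ^ 2 + 3 * ω ^ 3 - 2 * ω ^ 4) : A)) m (-s) r k
      (s ^ 4 * (27 - 9 * ω + 3 * ω ^ 2 - ω ^ 3 - 20 * ω ^ 4)) _ hY ?_ ?_ hk rfl ?_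
    · push_cast
      rw [hω, hs3]
      linear_combination (-81 + 27 * α + 27 * α ^ 2 - 45 * α ^ 3 - α ^ 4 + 16 * α ^ 5 -
        4 * α ^ 6) / 81 * hα
    · rw [← hr, hXK]
      push_cast
      rw [hs3]
      field_simp
      ring
    · push_cast
      rw [hω, hs3]
      linear_combination (54 * α + 18 * α ^ 2 - 78 * α ^ 3 + 46 * α ^ 4 + 57 * α ^ 5 - 47 * α ^ 6 +
        13 * α ^ 7 - 3 * α ^ 8 + α ^ 9 + 20 * α ^ 10) / 81 * hα

end IsDyadicSubring

theorem isIntegral_fifth_root_two {α : ℝ} (hα : α ^ 5 = 2) : IsIntegral ℚ α :=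
  ⟨Polynomial.X ^ 5 - Polynomial.C 2, Polynomial.monic_X_pow_sub_C _ (by decide), by simp [hα]⟩

theorem minpoly_fifth_root_two {α : ℝ} (hα : α ^ 5 = 2) :
    minpoly ℚ α = Polynomial.X ^ 5 - Polynomial.C 2 := by
  refine (minpoly.eq_of_irreducible_of_monic
    (X_pow_sub_C_irreducible_of_prime (by decide) fun b hb => ?_) (by simp [hα])
    (Polynomial.monic_X_pow_sub_C _ (by decide))).symm
  refine irrational_nrt_of_n_not_dvd_multiplicity (x := b) 5 (m := 2) (by decide) 2
    (by exact_mod_cast hb) ?_ ⟨b, rfl⟩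
  rw [show ((2 : ℤ)) = ((2 : ℕ) : ℤ) from rfl, multiplicity_self]
  decide

theorem exists_isFifthRootBasis {α : ℝ} (hα : α ^ 5 = 2)
    [NumberField (IntermediateField.adjoin ℚ ({α} : Set ℝ))] :
    ∃ (a : 𝓞 (IntermediateField.adjoin ℚ ({α} : Set ℝ)))
      (b : Module.Basis (Fin 5) ℚ (IntermediateField.adjoin ℚ ({α} : Set ℝ))),
      IsFifthRootBasis a b ∧
        algebraMap (𝓞 _) _ a = IntermediateField.AdjoinSimple.gen ℚ α := by
  have hint := isIntegral_fifth_root_two hα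
  have hdim : (IntermediateField.adjoin.powerBasis hint).dim = 5 := by
    rw [IntermediateField.adjoin.powerBasis_dim, minpoly_fifth_root_two hα,
      Polynomial.natDegree_X_pow_sub_C]
  have hgen : IntermediateField.AdjoinSimple.gen ℚ α ^ 5 = 2 := Subtype.ext hα
  have hgenint : IsIntegral ℤ (IntermediateField.AdjoinSimple.gen ℚ α) :=
    ⟨Polynomial.X ^ 5 - Polynomial.C 2, Polynomial.monic_X_pow_sub_C _ (by decide),
      by simp [hgen]⟩
  refine ⟨⟨_, hgenint⟩, (IntermediateField.adjoin.powerBasis hint).basis.reindex (finCongr hdim),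
    ⟨?_, fun i => ?_⟩, rfl⟩
  · exact RingOfIntegers.ext hgen
  · rw [Module.Basis.reindex_apply, PowerBasis.basis_eq_pow]
    rfl

/-- Lemma 5 (first curve) of the paper: with `α = ⁵√2` and `K = ℚ(α) ⊆ ℝ`, the only
solutions of `α⁴X⁴ + α³X³ + α²X² + αX + 1 = (α-1)Y²` with `X ∈ ℚ` and `Y ∈ K` are
`(X,Y) = (1, ±(α⁴+α³+α²+α+1))` and `(X,Y) = (-1/3, ±(3α⁴+5α³-α²+3α+5)/9)`. -/
theorem chabauty_curve_C1 (α : ℝ) (hα : α ^ 5 = 2) (hαpos : 0 < α)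
    (X : ℚ) (Y : ℝ) (hY : Y ∈ IntermediateField.adjoin ℚ ({α} : Set ℝ)) :
    α ^ 4 * (X : ℝ) ^ 4 + α ^ 3 * (X : ℝ) ^ 3 + α ^ 2 * (X : ℝ) ^ 2 + α * (X : ℝ) + 1
        = (α - 1) * Y ^ 2 ↔
      (X = 1 ∧ (Y = α ^ 4 + α ^ 3 + α ^ 2 + α + 1 ∨
                Y = -(α ^ 4 + α ^ 3 + α ^ 2 + α + 1))) ∨
      (X = -(1 / 3) ∧ (Y = (3 * α ^ 4 + 5 * α ^ 3 - α ^ 2 + 3 * α + 5) / 9 ∨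
                       Y = -((3 * α ^ 4 + 5 * α ^ 3 - α ^ 2 + 3 * α + 5) / 9))) := by
  have hα1 : α - 1 ≠ 0 := by
    intro h
    rw [sub_eq_zero.1 h] at hα
    norm_num at hα
  have h1 : α ^ 4 * ((1 : ℚ) : ℝ) ^ 4 + α ^ 3 * ((1 : ℚ) : ℝ) ^ 3 + α ^ 2 * ((1 : ℚ) : ℝ) ^ 2 +
      α * ((1 : ℚ) : ℝ) + 1 = (α - 1) * (α ^ 4 + α ^ 3 + α ^ 2 + α + 1) ^ 2 := by
    push_cast
    linear_combination (-(α ^ 4 + α ^ 3 + α ^ 2 + α + 1)) * hα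
  have h3 : α ^ 4 * ((-(1 / 3) : ℚ) : ℝ) ^ 4 + α ^ 3 * ((-(1 / 3) : ℚ) : ℝ) ^ 3 +
      α ^ 2 * ((-(1 / 3) : ℚ) : ℝ) ^ 2 + α * ((-(1 / 3) : ℚ) : ℝ) + 1 =
      (α - 1) * ((3 * α ^ 4 + 5 * α ^ 3 - α ^ 2 + 3 * α + 5) / 9) ^ 2 := by
    push_cast
    linear_combination (-53 + 11 * α + 11 * α ^ 2 - 21 * α ^ 3 - 9 * α ^ 4) / 81 * hα
  constructor
  · intro hXY
    have := IntermediateField.adjoin.finiteDimensional (isIntegral_fifth_root_two hα)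
    have : NumberField (IntermediateField.adjoin ℚ ({α} : Set ℝ)) := ⟨⟩
    obtain ⟨a, b, hab, hgen⟩ := exists_isFifthRootBasis hα
    obtain ⟨A, hA, -⟩ := hab.exists_isDyadicSubring
    have hX : X = 1 ∨ X = -(1 / 3) := by
      refine hA.abscissa_eq (Y := ⟨Y, hY⟩) (fun n t y ht hy => ?_)
        (algebraMap (IntermediateField.adjoin ℚ ({α} : Set ℝ)) ℝ) ?_ ?_
      · refine hab.exists_eq_mul_sq rfl (B := n * (algebraMap _ _ a - 1)) ?_ ht hy
        exact (isIntegral_algebraMap (x := n)).mul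
          ((RingOfIntegers.isIntegral_coe a).sub isIntegral_one)
      · rw [hgen]
        exact hαpos
      · rw [hgen]
        exact Subtype.ext (by simpa using hXY)
    rcases hX with rfl | rfl
    · rw [h1] at hXY
      exact Or.inl ⟨rfl, sq_eq_sq_iff_eq_or_eq_neg.1 (mul_left_cancel₀ hα1 hXY).symm⟩
    · rw [h3] at hXY
      exact Or.inr ⟨rfl, sq_eq_sq_iff_eq_or_eq_neg.1 (mul_left_cancel₀ hα1 hXY).symm⟩
  · rintro (⟨rfl, rfl | rfl⟩ | ⟨rfl, rfl | rfl⟩)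
    · exact h1
    · rw [neg_sq, h1]
    · exact h3
    · rw [neg_sq, h3]
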